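/- Let K = GF(q) be a finite field with q ≡ 1 (mod 4) and (V, f) a finite-dimensional nondegenerate symmetric bilinear space over K. For φ ∈ O(V) the following are equivalent: (1) σφσ⁻¹ = φ⁻¹ for some involution σ ∈ Ω(V); (2) αφα⁻¹ = φ⁻¹ for some α ∈ SO(V); (3) if dim V ≡ 2 (mod 4), then φ has an orthogonally indecomposable orthogonal summand of odd dimension. -/

import Mathlib

open Polynomial Module

namespace Biref

variable {K V : Type*} [Field K] [AddCommGroup V] [Module K V]

/-- The orthogonal group of a bilinear form: all linear automorphisms preserving `f`. -/
def orthGroup (f : LinearMap.BilinForm K V) : Subgroup (V ≃ₗ[K] V) where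
  carrier := {φ | ∀ x y : V, f (φ x) (φ y) = f x y}
  one_mem' := fun _ _ => rfl
  mul_mem' := by
    intro a b ha hb x y
    simpa using (ha (b x) (b y)).trans (hb x y)
  inv_mem' := by
    intro a ha x y
    show f (a.symm x) (a.symm y) = f x y
    conv_rhs => rw [← a.apply_symm_apply x, ← a.apply_symm_apply y]
    exact (ha _ _).symm

/-- The special orthogonal group: isometries of determinant 1. -/
def specialOrthGroup (f : LinearMap.BilinForm K V) : Subgroup (V ≃ₗ[K] V) where
  carrier := {φ | (∀ x y : V, f (φ x) (φ y) = f x y) ∧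
      LinearMap.det (φ : V →ₗ[K] V) = 1}
  one_mem' := ⟨fun _ _ => rfl, by simp⟩
  mul_mem' := by
    rintro a b ⟨ha, ha'⟩ ⟨hb, hb'⟩
    refine ⟨fun x y => by simpa using (ha (b x) (b y)).trans (hb x y), ?_⟩
    rw [LinearEquiv.coe_toLinearMap_mul, map_mul, ha', hb', one_mul]
  inv_mem' := by
    rintro a ⟨ha, ha'⟩
    refine ⟨fun x y => ?_, ?_⟩
    · show f (a.symm x) (a.symm y) = f x y
      conv_rhs => rw [← a.apply_symm_apply x, ← a.apply_symm_apply y]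
      exact (ha _ _).symm
    · have h1 : LinearMap.det ((a⁻¹ * a : V ≃ₗ[K] V) : V →ₗ[K] V) = 1 := by
        rw [inv_mul_cancel, LinearEquiv.coe_toLinearMap_one, LinearMap.det_id]
      rw [LinearEquiv.coe_toLinearMap_mul, map_mul, ha', mul_one] at h1
      exact h1

/-- The commutator subgroup `Ω(V)` of the orthogonal group. -/
def omegaGroup (f : LinearMap.BilinForm K V) : Subgroup (V ≃ₗ[K] V) :=
  ⁅orthGroup f, orthGroup f⁆

/-- `g` is a product of two involutions lying in the subgroup `H`. -/
def IsBireflectionalIn {G : Type*} [Group G] (H : Subgroup G) (g : G) : Prop :=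
  ∃ σ τ : G, σ ∈ H ∧ τ ∈ H ∧ σ ^ 2 = 1 ∧ τ ^ 2 = 1 ∧ g = σ * τ

/-- `g` is bireflectional in the group `G`. -/
def IsBireflectional {G : Type*} [Group G] (g : G) : Prop :=
  ∃ σ τ : G, σ ^ 2 = 1 ∧ τ ^ 2 = 1 ∧ g = σ * τ

/-- `g` is reversed by some element of `H`. -/
def IsReversibleIn {G : Type*} [Group G] (H : Subgroup G) (g : G) : Prop :=
  ∃ α : G, α ∈ H ∧ α * g * α⁻¹ = g⁻¹

/-- A subspace is invariant under an endomorphism. -/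
def Invt (ψ : V →ₗ[K] V) (U : Submodule K V) : Prop :=
  ∀ x ∈ U, ψ x ∈ U

/-- The discriminant of a (finite-dimensional, nondegenerate) bilinear space is the class
of `d` in `K*/(K*)²`: some Gram determinant equals `d` times a nonzero square. -/
def HasDisc (f : LinearMap.BilinForm K V) (d : K) : Prop :=
  ∃ (b : Basis (Fin (Module.finrank K V)) K V) (c : Kˣ),
    (Matrix.of fun i j => f (b i) (b j)).det = d * (c : K) ^ 2

/-- A nondegenerate symmetric bilinear space is hyperbolic iff its Witt index is half its
dimension, i.e. there is a totally isotropic subspace of half the dimension. -/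
def IsHyperbolicSpace (f : LinearMap.BilinForm K V) : Prop :=
  ∃ W : Submodule K V, (∀ x ∈ W, ∀ y ∈ W, f x y = 0) ∧
    2 * Module.finrank K W = Module.finrank K V

/-- The multiplicity of `p ^ d` as an elementary divisor of `φ`. -/
noncomputable def edMult (φ : Module.End K V) (p : K[X]) (d : ℕ) : ℕ :=
  (2 * Module.finrank K (LinearMap.ker (Polynomial.aeval φ p ^ d))
    - Module.finrank K (LinearMap.ker (Polynomial.aeval φ p ^ (d + 1)))
    - Module.finrank K (LinearMap.ker (Polynomial.aeval φ p ^ (d - 1)))) / p.natDegree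

/-- `n_j(φ)`: the number of elementary divisors `(x ± 1) ^ d` of `φ` with `d ≡ j mod 8`,
counted with multiplicity. -/
noncomputable def nPM [FiniteDimensional K V] (φ : Module.End K V) (j : ℕ) : ℕ :=
  ∑ d ∈ Finset.range (Module.finrank K V + 1),
    if d % 8 = j % 8 then edMult φ (X - 1) d + edMult φ (X + 1) d else 0

/-- The Fitting one space `Bahn^∞(ψ) = ⋂ⱼ im (ψ - 1)^j`. -/
noncomputable def bahnInf (ψ : Module.End K V) : Submodule K V :=
  ⨅ j : ℕ, LinearMap.range ((ψ - 1) ^ j)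

/-- The `K[x]`-submodule generated by `v` (`x` acting as `ψ`). -/
def cycSub (ψ : Module.End K V) (v : V) : Submodule K V :=
  Submodule.span K (Set.range fun n : ℕ => (ψ ^ n) v)

/-- `V` is a cyclic `K[x]`-module, `x` acting as `ψ`. -/
def IsCyclicEnd (ψ : Module.End K V) : Prop :=
  ∃ v : V, cycSub ψ v = ⊤

/-- `V` is a direct sum of two cyclic `K[x]`-submodules, `x` acting as `ψ`. -/
def IsBicyclicEnd (ψ : Module.End K V) : Prop :=
  ∃ v w : V, cycSub ψ v ⊓ cycSub ψ w = ⊥ ∧ cycSub ψ v ⊔ cycSub ψ w = ⊤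

/-- `V` is an indecomposable `K[x]`-module, `x` acting as `ψ`. -/
def ModIndec (ψ : Module.End K V) : Prop :=
  (⊥ : Submodule K V) ≠ ⊤ ∧
    ¬∃ A B : Submodule K V, Invt ψ A ∧ Invt ψ B ∧ A ≠ ⊥ ∧ B ≠ ⊥ ∧ A ⊓ B = ⊥ ∧ A ⊔ B = ⊤

/-- `ψ` is orthogonally indecomposable w.r.t. `f`: `V ≠ 0` and the only nondegenerate
invariant subspaces are `0` and `V`. -/
def OrthIndec (f : LinearMap.BilinForm K V) (ψ : Module.End K V) : Prop :=
  (⊥ : Submodule K V) ≠ ⊤ ∧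
    ∀ U : Submodule K V, Invt ψ U → (f.restrict U).Nondegenerate → U = ⊥ ∨ U = ⊤

/-- The Witt index: the dimension of a maximal totally isotropic subspace. -/
noncomputable def wittIndex (f : LinearMap.BilinForm K V) : ℕ :=
  sSup {n | ∃ W : Submodule K V, (∀ x ∈ W, ∀ y ∈ W, f x y = 0) ∧ Module.finrank K W = n}




section Refl
variable {K V : Type*} [Field K] [AddCommGroup V] [Module K V]

theorem refl_aux (f : LinearMap.BilinForm K V) (a : V) :
    Function.Involutive (LinearMap.transvection (-(2 / f a a) • f a) a) := by
  intro x
  simp only [LinearMap.transvection.apply, map_add, map_smul, LinearMap.smul_apply, smul_eq_mul]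
  by_cases h : f a a = 0
  · simp [h]
  · have : (2 / f a a) * f a a = 2 := by field_simp
    have h4 : -(2 / f a a) * f a a = -2 := by linear_combination -this
    rw [h4]; module

/-- reflection -/
noncomputable def refl (f : LinearMap.BilinForm K V) (a : V) : V ≃ₗ[K] V :=
  LinearEquiv.ofInvolutive (LinearMap.transvection (-(2 / f a a) • f a) a) (refl_aux f a)

theorem refl_apply (f : LinearMap.BilinForm K V) (a x : V) :
    refl f a x = x - (2 / f a a * f a x) • a := by
  simp [refl, LinearMap.transvection.apply, sub_eq_add_neg]

theorem refl_sq (f : LinearMap.BilinForm K V) (a : V) : refl f a * refl f a = 1 := by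
  ext x
  exact refl_aux f a x

theorem refl_inv (f : LinearMap.BilinForm K V) (a : V) : (refl f a)⁻¹ = refl f a :=
  inv_eq_of_mul_eq_one_left (refl_sq f a)

theorem refl_det [FiniteDimensional K V] (f : LinearMap.BilinForm K V) (a : V) (h : f a a ≠ 0) :
    LinearMap.det (refl f a : V →ₗ[K] V) = -1 := by
  have : (refl f a : V →ₗ[K] V) = LinearMap.transvection (-(2 / f a a) • f a) a := rfl
  rw [this, LinearMap.transvection.det]
  simp only [LinearMap.smul_apply, smul_eq_mul]
  field_simp
  ring

theorem refl_mem (f : LinearMap.BilinForm K V) (hs : f.IsSymm) (a : V) :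
    refl f a ∈ orthGroup f := by
  intro x y
  simp only [refl_apply, map_sub, map_smul, LinearMap.sub_apply, LinearMap.smul_apply, smul_eq_mul]
  rw [hs.eq x a]
  by_cases h : f a a = 0
  · simp [h]
  · field_simp
    ring

theorem refl_smul (f : LinearMap.BilinForm K V) (a : V) (c : K) (hc : c ≠ 0) :
    refl f (c • a) = refl f a := by
  ext x
  simp only [refl_apply, map_smul, LinearMap.smul_apply, smul_eq_mul, smul_smul]
  congr 2
  by_cases h : f a a = 0
  · simp [h]
  · field_simp

theorem refl_conj (f : LinearMap.BilinForm K V) (g : V ≃ₗ[K] V) (hg : g ∈ orthGroup f) (a : V) :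
    g * refl f a * g⁻¹ = refl f (g a) := by
  rw [mul_inv_eq_iff_eq_mul]
  ext x
  simp only [LinearEquiv.mul_apply, refl_apply, map_sub, map_smul]
  rw [hg a a, hg a x]

theorem refl_comm (f : LinearMap.BilinForm K V) (hs : f.IsSymm) (a b : V) (h : f a b = 0) :
    refl f a * refl f b = refl f b * refl f a := by
  have h' : f b a = 0 := by rw [← hs.eq]; exact h
  ext x
  simp only [LinearEquiv.mul_apply, refl_apply, map_sub, map_smul, h, h', mul_zero]
  module

theorem refl_pair (f : LinearMap.BilinForm K V) (hs : f.IsSymm) (h2 : (2 : K) ≠ 0) (a b : V)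
    (h : f a b = 0) (ha : f a a ≠ 0) (hb : f b b ≠ 0) (hsq : IsSquare (f a a * f b b)) :
    refl f a * refl f b ∈ omegaGroup f := by
  obtain ⟨c, hc⟩ := hsq
  have hc0 : c ≠ 0 := by rintro rfl; simp at hc; tauto
  have h' : f b a = 0 := by rw [← hs.eq]; exact h
  set d := c / f b b with hd
  have hd0 : d ≠ 0 := div_ne_zero hc0 hb
  have key : refl f (a - d • b) a = d • b := by
    have e1 : f (a - d • b) (a - d • b) = 2 * f a a := by
      simp only [map_sub, map_smul, LinearMap.sub_apply, LinearMap.smul_apply, smul_eq_mul, h, h', hd]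
      field_simp
      linear_combination -hc
    have e2 : f (a - d • b) a = f a a := by
      simp [h']
    rw [refl_apply, e1, e2]
    have : 2 / (2 * f a a) * f a a = 1 := by field_simp
    rw [this, one_smul]; abel
  have hg := refl_mem f hs (a - d • b)
  have := refl_conj f _ hg a
  rw [key, refl_smul f b d hd0] at this
  rw [← this]
  have h3 := Subgroup.commutator_mem_commutator (refl_mem f hs a) hg
  rw [commutatorElement_def, refl_inv f a] at h3
  have h4 : ⁅orthGroup f, orthGroup f⁆ = omegaGroup f := rfl
  rw [h4] at h3
  simpa [mul_assoc] using h3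

theorem list_omega [Fintype K] (f : LinearMap.BilinForm K V) (hs : f.IsSymm) (h2 : (2 : K) ≠ 0) :
    ∀ (k : ℕ) (l : List V), l.length = k → Even k → l.Pairwise (fun x y => f x y = 0) →
      (∀ x ∈ l, f x x ≠ 0) → IsSquare (l.map fun x => f x x).prod →
      (l.map (refl f)).prod ∈ omegaGroup f := by
  have hns : ∀ x y : K, ¬ IsSquare x → ¬ IsSquare y → IsSquare (x * y) := by
    classical
    intro x y hx hy
    have hx0 : x ≠ 0 := by rintro rfl; exact hx ⟨0, by simp⟩
    have hy0 : y ≠ 0 := by rintro rfl; exact hy ⟨0, by simp⟩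
    rw [← quadraticChar_one_iff_isSquare (mul_ne_zero hx0 hy0), map_mul]
    rw [← quadraticChar_neg_one_iff_not_isSquare] at hx hy
    rw [hx, hy]; rfl
  have hcan : ∀ x y : K, x ≠ 0 → IsSquare x → IsSquare (x * y) → IsSquare y := by
    rintro x y hx h1 h3
    have := h3.div h1
    rwa [mul_div_cancel_left₀ _ hx] at this
  intro k
  induction k using Nat.strong_induction_on with
  | _ k ih =>
    intro l hl hk hp hn hsq
    match l with
    | [] => simp only [List.map_nil, List.prod_nil]; exact one_mem _
    | [a] => simp at hl; subst hl; exact absurd hk (by decide)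
    | [a, b] =>
      simp at hp hn hsq ⊢
      exact refl_pair f hs h2 a b hp hn.1 hn.2 hsq
    | a :: b :: c :: l' =>
      have hl3 : l'.length + 1 = k - 2 := by simp at hl; omega
      have hk2 : k - 2 < k := by omega
      have hke : Even (k - 2) := by
        rw [Nat.even_iff] at hk ⊢; simp at hl; omega
      have IH := ih (k - 2) hk2
      simp only [List.pairwise_cons, List.mem_cons, forall_eq_or_imp] at hp hn
      obtain ⟨⟨hab, hac, hal⟩, ⟨hbc, hbl⟩, hcl, hll⟩ := hp
      obtain ⟨ha, hb, hc, hl0⟩ := hn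
      simp only [List.map_cons, List.prod_cons] at hsq ⊢
      have IH' : ∀ x : V, (∀ y ∈ l', f x y = 0) → f x x ≠ 0 →
          IsSquare (f x x * (l'.map fun x => f x x).prod) →
          refl f x * (l'.map (refl f)).prod ∈ omegaGroup f := by
        intro x h1 h3 h4
        have := IH (x :: l') (by simpa using hl3) hke (List.pairwise_cons.2 ⟨h1, hll⟩)
          (by simpa [h3] using hl0) (by simpa using h4)
        simpa using this
      by_cases sab : IsSquare (f a a * f b b)
      · have := mul_mem (refl_pair f hs h2 a b hab ha hb sab) (IH' c hcl hc
          (hcan _ _ (mul_ne_zero ha hb) sab (by simpa [mul_assoc] using hsq)))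
        simpa [mul_assoc] using this
      · by_cases sac : IsSquare (f a a * f c c)
        · have := mul_mem (refl_pair f hs h2 a c hac ha hc sac) (IH' b hbl hb
            (hcan _ _ (mul_ne_zero ha hc) sac (by convert hsq using 1; ring)))
          have e : refl f a * (refl f b * (refl f c * (l'.map (refl f)).prod)) =
            refl f a * refl f c * (refl f b * (l'.map (refl f)).prod) := by
            rw [← mul_assoc (refl f b), refl_comm f hs b c hbc]; simp only [mul_assoc]
          rw [e]; exact this
        · have sbc : IsSquare (f b b * f c c) := by
            have := hns _ _ sab sac
            refine hcan (f a a * f a a) _ (mul_ne_zero ha ha) ⟨_, rfl⟩ ?_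
            convert this using 1; ring
          have := mul_mem (refl_pair f hs h2 b c hbc hb hc sbc) (IH' a hal ha
            (hcan _ _ (mul_ne_zero hb hc) sbc (by convert hsq using 1; ring)))
          have e : refl f a * (refl f b * (refl f c * (l'.map (refl f)).prod)) =
            refl f b * refl f c * (refl f a * (l'.map (refl f)).prod) := by
            rw [← mul_assoc (refl f a), refl_comm f hs a b hab, mul_assoc (refl f b), 
              ← mul_assoc (refl f a), refl_comm f hs a c hac]; simp only [mul_assoc]
          rw [e]; exact this

theorem list_refl_mem (f : LinearMap.BilinForm K V) (hs : f.IsSymm) (l : List V) :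
    (l.map (refl f)).prod ∈ orthGroup f := by
  apply Subgroup.list_prod_mem
  simp only [List.mem_map]
  rintro _ ⟨a, -, rfl⟩
  exact refl_mem f hs a

theorem list_refl_det [FiniteDimensional K V] (f : LinearMap.BilinForm K V) (l : List V)
    (h : ∀ x ∈ l, f x x ≠ 0) :
    LinearMap.det ((l.map (refl f)).prod : V →ₗ[K] V) = (-1) ^ l.length := by
  induction l with
  | nil => simp
  | cons a l ih =>
    simp only [List.mem_cons, forall_eq_or_imp] at h
    rw [List.map_cons, List.prod_cons, LinearEquiv.coe_toLinearMap_mul, map_mul, ih h.2, refl_det f a h.1]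
    simp [pow_succ]

theorem list_refl_orth (f : LinearMap.BilinForm K V) (l : List V) (x : V)
    (h : ∀ y ∈ l, f y x = 0) : (l.map (refl f)).prod x = x := by
  induction l with
  | nil => simp
  | cons a l ih =>
    simp only [List.mem_cons, forall_eq_or_imp] at h
    rw [List.map_cons, List.prod_cons, LinearEquiv.mul_apply, ih h.2, refl_apply, h.1]
    simp

theorem list_refl_span (f : LinearMap.BilinForm K V) (hs : f.IsSymm) (l : List V)
    (hp : l.Pairwise (fun x y => f x y = 0)) (h : ∀ x ∈ l, f x x ≠ 0)
    (x : V) (hx : x ∈ Submodule.span K {y | y ∈ l}) : (l.map (refl f)).prod x = -x := by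
  induction l generalizing x with
  | nil => 
    have : x = 0 := by simpa using hx
    simp [this]
  | cons a l ih =>
    simp only [List.mem_cons, forall_eq_or_imp, List.pairwise_cons] at h hp
    rw [List.map_cons, List.prod_cons, LinearEquiv.mul_apply]
    have e : {y | y ∈ a :: l} = insert a {y | y ∈ l} := by ext; simp
    rw [e, Submodule.mem_span_insert] at hx
    obtain ⟨c, z, hz, rfl⟩ := hx
    have hza : f a z = 0 := by
      have : Submodule.span K {y | y ∈ l} ≤ LinearMap.ker (f a) := by
        rw [Submodule.span_le]; exact hp.1
      exact this hz
    rw [map_add, ih hp.2 h.2 z hz, map_smul, list_refl_orth f l a, refl_apply]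
    · simp only [map_add, map_smul, map_neg, hza, smul_eq_mul]
      have : 2 / f a a * (c * f a a + -0) = 2 * c := by have := h.1; field_simp; ring
      rw [this]; module
    · intro y hy; rw [← hs.eq]; exact hp.1 y hy

end Refl


section Labels
variable {K V : Type*} [Field K] [AddCommGroup V] [Module K V]

/-- nondegenerate subspace -/
def ND (f : LinearMap.BilinForm K V) (W : Submodule K V) : Prop :=
  ∀ x ∈ W, (∀ y ∈ W, f x y = 0) → x = 0

theorem ND_restrict (f : LinearMap.BilinForm K V) (hs : f.IsSymm) (W : Submodule K V) :
    ND f W ↔ (f.restrict W).Nondegenerate := by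
  have hl : ND f W ↔ (f.restrict W).SeparatingLeft := by
    constructor
    · intro h x hx
      exact Subtype.ext (h x x.2 (fun y hy => hx ⟨y, hy⟩))
    · intro h x hx hy
      exact congrArg Subtype.val (h ⟨x, hx⟩ (fun y => hy y y.2))
  rw [hl]
  constructor
  · intro h
    refine ⟨h, fun y hy => h y (fun x => ?_)⟩
    have := hy x
    rw [← this]
    exact hs.eq _ _
  · exact fun h => h.1

theorem ND_top (f : LinearMap.BilinForm K V) (hn : f.Nondegenerate) : ND f ⊤ :=
  fun x _ h => hn.1 x (fun y => h y trivial)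

theorem top_ND (f : LinearMap.BilinForm K V) (hs : f.IsSymm) (h : ND f ⊤) : f.Nondegenerate :=
  ⟨fun x hx => h x trivial (fun y _ => hx y), fun x hx => h x trivial (fun y _ => by
    rw [← hs.eq]; exact hx y)⟩

theorem ND_sup (f : LinearMap.BilinForm K V) (hs : f.IsSymm) {A B : Submodule K V}
    (hA : ND f A) (hB : ND f B) (h : ∀ x ∈ A, ∀ y ∈ B, f x y = 0) : ND f (A ⊔ B) := by
  intro x hx hxy
  obtain ⟨a, ha, b, hb, rfl⟩ := Submodule.mem_sup.1 hx
  have h1 : a = 0 := hA a ha fun y hy => by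
    have := hxy y (Submodule.mem_sup_left hy)
    rwa [map_add, LinearMap.add_apply, hs.eq b y, h y hy b hb, add_zero] at this
  have h2 : b = 0 := hB b hb fun y hy => by
    have := hxy y (Submodule.mem_sup_right hy)
    rwa [map_add, LinearMap.add_apply, h a ha y hy, zero_add] at this
  simp [h1, h2]

theorem ND_disj (f : LinearMap.BilinForm K V) (hs : f.IsSymm) {A B : Submodule K V}
    (hA : ND f A) (h : ∀ x ∈ A, ∀ y ∈ B, f x y = 0) : Disjoint A B := by
  rw [Submodule.disjoint_def]
  intro x hA' hB'
  exact hA x hA' fun y hy => by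
    rw [hs.eq x y]; exact h y hy x hB'

theorem ND_split [FiniteDimensional K V] (f : LinearMap.BilinForm K V) (hs : f.IsSymm)
    {X Y : Submodule K V}
    (hX : ND f X) (hY : ND f Y) (h : Y ≤ X) : Y ⊔ (X ⊓ f.orthogonal Y) = X ∧
      ND f (X ⊓ f.orthogonal Y) := by
  have hc := LinearMap.BilinForm.isCompl_orthogonal_of_restrict_nondegenerate hs.isRefl
    ((ND_restrict f hs Y).1 hY)
  have e : Y ⊔ (X ⊓ f.orthogonal Y) = X := by
    rw [inf_comm, ← sup_inf_assoc_of_le _ h, hc.sup_eq_top, top_inf_eq]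
  refine ⟨e, fun x hx hxy => hX x hx.1 fun y hy => ?_⟩
  rw [← e] at hy
  obtain ⟨a, ha, b, hb, rfl⟩ := Submodule.mem_sup.1 hy
  rw [map_add, hxy b hb, add_zero, ← hs.eq]
  exact hx.2 a ha

variable [Fintype K] [DecidableEq K]

/-- label of a subspace: parity of dimension and discriminant -/
def Lab (f : LinearMap.BilinForm K V) (M : Submodule K V) (e : ℕ) (δ : ℤ) : Prop :=
  ∃ l : List V, l.Pairwise (fun x y => f x y = 0) ∧ (∀ x ∈ l, f x x ≠ 0) ∧
    Submodule.span K {y | y ∈ l} = M ∧ l.length % 2 = e ∧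
    quadraticChar K (l.map fun x => f x x).prod = δ

theorem Lab_bot (f : LinearMap.BilinForm K V) : Lab f ⊥ 0 1 := ⟨[], by simp⟩

theorem Lab_sup (f : LinearMap.BilinForm K V) {A B : Submodule K V} {e e' : ℕ} {δ δ' : ℤ}
    (hA : Lab f A e δ) (hB : Lab f B e' δ') (h : ∀ x ∈ A, ∀ y ∈ B, f x y = 0) :
    Lab f (A ⊔ B) ((e + e') % 2) (δ * δ') := by
  obtain ⟨l, h1, h2, rfl, h4, h5⟩ := hA
  obtain ⟨l', h1', h2', rfl, h4', h5'⟩ := hB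
  refine ⟨l ++ l', List.pairwise_append.2 ⟨h1, h1', fun x hx y hy =>
    h x (Submodule.subset_span hx) y (Submodule.subset_span hy)⟩, ?_, ?_, ?_, ?_⟩
  · intro x hx
    rcases List.mem_append.1 hx with hx | hx
    exacts [h2 x hx, h2' x hx]
  · rw [← Submodule.span_union]
    congr 1
    ext; simp
  · rw [List.length_append]; omega
  · rw [List.map_append, List.prod_append, map_mul, h5, h5']

theorem Lab_map (f : LinearMap.BilinForm K V) (W : Submodule K V) (M : Submodule K W) {e : ℕ} {δ : ℤ}
    (h : Lab (f.restrict W) M e δ) : Lab f (M.map W.subtype) e δ := by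
  obtain ⟨l, h1, h2, rfl, h4, h5⟩ := h
  refine ⟨l.map W.subtype, ?_, ?_, ?_, ?_, ?_⟩
  · rw [List.pairwise_map]; exact h1
  · simp only [List.mem_map]
    rintro _ ⟨x, hx, rfl⟩
    exact h2 x hx
  · rw [Submodule.map_span]
    congr 1
    ext; simp
  · simpa using h4
  · rw [List.map_map, ← h5]; rfl

theorem Lab_ND (f : LinearMap.BilinForm K V) (hs : f.IsSymm) {M : Submodule K V} {e : ℕ} {δ : ℤ}
    (h : Lab f M e δ) : ND f M := by
  obtain ⟨l, h1, h2, rfl, -, -⟩ := h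
  induction l with
  | nil => intro x hx _; simpa using hx
  | cons a l ih =>
    simp only [List.mem_cons, forall_eq_or_imp, List.pairwise_cons] at h1 h2
    have e : {y | y ∈ a :: l} = {a} ∪ {y | y ∈ l} := by ext; simp
    rw [e, Submodule.span_union]
    refine ND_sup f hs ?_ (ih h1.2 h2.2) ?_
    · intro x hx hxy
      obtain ⟨c, rfl⟩ := Submodule.mem_span_singleton.1 hx
      have := hxy a (Submodule.mem_span_singleton_self a)
      simp [h2.1] at this
      simp [this]
    · intro x hx y hy
      obtain ⟨c, rfl⟩ := Submodule.mem_span_singleton.1 hx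
      have : Submodule.span K {y | y ∈ l} ≤ LinearMap.ker (f a) := by
        rw [Submodule.span_le]; exact h1.1
      have h3 : f a y = 0 := this hy
      simp [h3]

theorem Lab_delta (f : LinearMap.BilinForm K V) {M : Submodule K V} {e : ℕ} {δ : ℤ}
    (h : Lab f M e δ) : δ = 1 ∨ δ = -1 := by
  obtain ⟨l, h1, h2, rfl, -, rfl⟩ := h
  apply quadraticChar_dichotomy
  apply List.prod_ne_zero
  simpa using h2

theorem Lab_gram [FiniteDimensional K V] (f : LinearMap.BilinForm K V) (hs : f.IsSymm) (h2 : (2 : K) ≠ 0)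
    {X : Submodule K V} (hX : ND f X) {ι : Type*} [Fintype ι] [DecidableEq ι] (b : Basis ι K X) :
    Lab f X (Fintype.card ι % 2)
      (quadraticChar K (Matrix.of fun i j => f (b i) (b j)).det) := by
  have : Invertible (2 : K) := invertibleOfNonzero h2
  have hs' : LinearMap.IsSymm (f.restrict X) := ⟨fun x y => hs.eq _ _⟩
  obtain ⟨v, hv⟩ := LinearMap.BilinForm.exists_orthogonal_basis (B := f.restrict X) hs'
  have hcard : finrank K X = Fintype.card ι := finrank_eq_card_basis b
  let e : Fin (finrank K X) ≃ ι := Fintype.equivOfCardEq (by simp [hcard])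
  let w := v.reindex e
  have hnd := (ND_restrict f hs X).1 hX
  have hne : ∀ i, f (v i) (v i) ≠ 0 := fun i => hv.not_isOrtho_basis_self_of_separatingLeft hnd.1 i
  have hdet : (Matrix.of fun i j => f (b i) (b j)).det * ((b.toMatrix w).det) ^ 2 =
      ∏ i, f (v i) (v i) := by
    have h1 := LinearMap.BilinForm.toMatrix_mul_basis_toMatrix b w (f.restrict X)
    have h3 : LinearMap.BilinForm.toMatrix b (f.restrict X) = Matrix.of fun i j => f (b i) (b j) := by
      ext i j; simp [LinearMap.BilinForm.toMatrix_apply]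
    have h4 : LinearMap.BilinForm.toMatrix w (f.restrict X) = Matrix.diagonal fun i => f (w i) (w i) := by
      ext i j
      rw [LinearMap.BilinForm.toMatrix_apply, Matrix.diagonal_apply]
      split_ifs with h
      · subst h; rfl
      · have := hv (i := e.symm i) (j := e.symm j) (by simpa using h)
        simpa [w] using this
    rw [h3, h4] at h1
    have := congrArg Matrix.det h1
    rw [Matrix.det_mul, Matrix.det_mul, Matrix.det_transpose, Matrix.det_diagonal] at this
    rw [← e.prod_comp] at this
    simp only [w, Basis.reindex_apply, Equiv.symm_apply_apply] at this
    rw [← this]; simp only [w]; ring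
  have hbw : (b.toMatrix w).det ≠ 0 := by
    intro h0
    rw [h0] at hdet
    have : ∏ i, f (v i) (v i) ≠ 0 := Finset.prod_ne_zero_iff.2 fun i _ => hne i
    apply this; rw [← hdet]; ring
  refine ⟨List.ofFn fun i => (v i : V), ?_, ?_, ?_, ?_, ?_⟩
  · rw [List.pairwise_ofFn]
    intro i j hij
    exact hv hij.ne
  · simp only [List.mem_ofFn]
    rintro _ ⟨i, rfl⟩
    exact hne i
  · have e1 : {y | y ∈ List.ofFn fun i => (v i : V)} = X.subtype '' Set.range v := by
      ext y; simp [List.mem_ofFn]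
    rw [e1, ← Submodule.map_span, v.span_eq]; simp
  · simp [hcard]
  · rw [List.map_ofFn, List.prod_ofFn]
    simp only [Function.comp]
    rw [← hdet, map_mul, map_pow, quadraticChar_sq_one hbw, mul_one]

theorem Lab_exists [FiniteDimensional K V] (f : LinearMap.BilinForm K V) (hs : f.IsSymm) (h2 : (2 : K) ≠ 0)
    {X : Submodule K V} (hX : ND f X) : ∃ δ, Lab f X (finrank K X % 2) δ := by
  have := Lab_gram f hs h2 hX (finBasis K X)
  rw [Fintype.card_fin] at this
  exact ⟨_, this⟩

theorem Lab_lagr [FiniteDimensional K V] (f : LinearMap.BilinForm K V) (hs : f.IsSymm)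
    (h2 : (2 : K) ≠ 0) (hm : IsSquare (-1 : K)) :
    ∀ (n : ℕ) (X I : Submodule K V), finrank K X = n → ND f X → I ≤ X →
      (∀ x ∈ I, ∀ y ∈ I, f x y = 0) → (∀ x ∈ X, (∀ y ∈ I, f x y = 0) → x ∈ I) → Lab f X 0 1 := by
  intro n
  induction n using Nat.strong_induction_on with
  | _ n ih =>
    intro X I hn hX hI h0 hL
    by_cases hb : I = ⊥
    · have : X = ⊥ := by
        rw [eq_bot_iff, ← hb]
        intro x hx
        refine hL x hx fun y hy => ?_
        rw [hb, Submodule.mem_bot] at hy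
        simp [hy]
      rw [this]; exact Lab_bot f
    · obtain ⟨i, hi, hi0⟩ := Submodule.exists_mem_ne_zero_of_ne_bot hb
      obtain ⟨y₀, hy₀, hy₀'⟩ : ∃ y ∈ X, f i y ≠ 0 := by
        by_contra hcon
        push Not at hcon
        exact hi0 (hX i (hI hi) hcon)
      have hii := h0 i hi i hi
      obtain ⟨y, hy, hiy, hyy⟩ : ∃ y ∈ X, f i y = 1 ∧ f y y = 0 := by
        set y₁ := (f i y₀)⁻¹ • y₀ with hy₁
        have hy₁X : y₁ ∈ X := X.smul_mem _ hy₀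
        have h11 : f i y₁ = 1 := by simp [hy₁, hy₀']
        refine ⟨y₁ - (f y₁ y₁ / 2) • i, X.sub_mem hy₁X (X.smul_mem _ (hI hi)), ?_, ?_⟩
        · simp [hii, h11]
        · have h12 : f y₁ i = 1 := by rw [← hs.eq]; exact h11
          simp only [map_sub, map_smul, LinearMap.sub_apply, LinearMap.smul_apply, smul_eq_mul, hii, h11, h12]
          field_simp; ring
      have hyi : f y i = 1 := by rw [← hs.eq]; exact hiy
      set Y := Submodule.span K {z | z ∈ [i + y, i - y]} with hYd
      have hLY : Lab f Y 0 1 := by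
        refine ⟨[i + y, i - y], ?_, ?_, rfl, by simp, ?_⟩
        · simp [hii, hiy, hyy, hyi]
        · intro x hx
          simp only [List.mem_cons, List.not_mem_nil, or_false] at hx
          rcases hx with rfl | rfl
          · simp [hii, hiy, hyy, hyi]; rw [one_add_one_eq_two]; exact h2
          · simp [hii, hiy, hyy, hyi]; intro h; apply h2; linear_combination -h
        · have e : (List.map (fun x => f x x) [i + y, i - y]).prod = 2 ^ 2 * (-1) := by
            simp [hii, hiy, hyy, hyi]; ring
          rw [e, map_mul, map_pow, quadraticChar_sq_one h2, one_mul,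
            quadraticChar_one_iff_isSquare (by simp)]
          exact hm
      have ha1 : i + y ∈ Y := Submodule.subset_span (by simp)
      have ha2 : i - y ∈ Y := Submodule.subset_span (by simp)
      have hYX : Y ≤ X := by
        rw [hYd, Submodule.span_le]
        intro x hx
        simp only [List.mem_cons, List.not_mem_nil, or_false, Set.mem_ofPred_eq] at hx
        rcases hx with rfl | rfl
        · exact X.add_mem (hI hi) hy
        · exact X.sub_mem (hI hi) hy
      obtain ⟨hsum, hND'⟩ := ND_split f hs hX (Lab_ND f hs hLY) hYX
      have horth : ∀ x, x ∈ f.orthogonal Y ↔ f x i = 0 ∧ f x y = 0 := by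
        intro x
        constructor
        · intro h
          have h3 : f (i + y) x = 0 := h _ ha1
          have h4 : f (i - y) x = 0 := h _ ha2
          rw [hs.eq] at h3 h4
          simp at h3 h4
          have h5 : 2 * f x i = 0 := by linear_combination h3 + h4
          have h6 : f x i = 0 := by simpa [h2] using h5
          exact ⟨h6, by simpa [h6] using h3⟩
        · rintro ⟨h3, h4⟩ z hz
          change f z x = 0
          rw [hs.eq]
          have : Y ≤ LinearMap.ker (f x) := by
            rw [hYd, Submodule.span_le]
            intro z hz
            simp only [List.mem_cons, List.not_mem_nil, or_false, Set.mem_ofPred_eq] at hz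
            rcases hz with rfl | rfl <;> simp [h3, h4]
          exact this hz
      have hlt : finrank K (X ⊓ f.orthogonal Y : Submodule K V) < n := by
        rw [← hn]
        apply Submodule.finrank_lt_finrank_of_lt
        refine lt_of_le_of_ne inf_le_left fun h => ?_
        have : i ∈ X ⊓ f.orthogonal Y := by rw [h]; exact hI hi
        have := ((horth i).1 this.2).2
        rw [hiy] at this; exact one_ne_zero this
      have h3 := ih _ hlt (X ⊓ f.orthogonal Y) (I ⊓ f.orthogonal Y) rfl hND'
        (inf_le_inf_right _ hI) (fun x hx y hy => h0 x hx.1 y hy.1) (by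
          intro x hx hxI
          refine ⟨hL x hx.1 fun z hz => ?_, hx.2⟩
          have h5 : z - f z y • i ∈ I ⊓ f.orthogonal Y := by
            refine ⟨I.sub_mem hz (I.smul_mem _ hi), (horth _).2 ⟨?_, ?_⟩⟩
            · simp [h0 z hz i hi, hii]
            · simp [hiy]
          have h6 := hxI _ h5
          rw [map_sub, map_smul, ((horth x).1 hx.2).1] at h6
          simpa using h6)
      have h4 := Lab_sup f hLY h3 (fun x hx y hy => hy.2 x hx)
      rw [hsum] at h4
      exact h4

end Labels


section Cyc
variable {K V : Type*} [Field K] [AddCommGroup V] [Module K V]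

/-- the data of an isometry in terms of its self-adjoint and skew-adjoint part -/
structure Dat (f : LinearMap.BilinForm K V) (a N : Module.End K V) : Prop where
  hs : f.IsSymm
  nd : ND f ⊤
  ha : ∀ x y, f (a x) y = f x (a y)
  hN : ∀ x y, f (N x) y = - f x (N y)
  hc : ∀ x, a (N x) = N (a x)
  hN2 : ∀ x, N (N x) = a (a x) - (4 : K) • x

/-- cyclic subspace -/
noncomputable def Cy (a : Module.End K V) (v : V) : Submodule K V :=
  LinearMap.range (LinearMap.applyₗ v ∘ₗ (aeval a : K[X] →ₐ[K] Module.End K V).toLinearMap)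

theorem mem_Cy {a : Module.End K V} {v x : V} : x ∈ Cy a v ↔ ∃ r : K[X], aeval a r v = x := by
  simp [Cy]

theorem Cy_mem (a : Module.End K V) (v : V) (r : K[X]) : aeval a r v ∈ Cy a v := mem_Cy.2 ⟨r, rfl⟩

theorem Cy_self (a : Module.End K V) (v : V) : v ∈ Cy a v := mem_Cy.2 ⟨1, by simp⟩

theorem Cy_inv (a : Module.End K V) (v : V) : ∀ x ∈ Cy a v, a x ∈ Cy a v := by
  intro x hx
  obtain ⟨r, rfl⟩ := mem_Cy.1 hx
  exact mem_Cy.2 ⟨X * r, by simp⟩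

theorem aev_mul (a : Module.End K V) (r s : K[X]) (v : V) :
    aeval a (r * s) v = aeval a r (aeval a s v) := by simp

theorem Dat.adj {f : LinearMap.BilinForm K V} {a N : Module.End K V} (D : Dat f a N) (r : K[X]) :
    ∀ x y, f (aeval a r x) y = f x (aeval a r y) := by
  induction r using Polynomial.induction_on' with
  | add p q hp hq => intro x y; simp [hp, hq]
  | monomial n c =>
    intro x y
    simp only [aeval_monomial, Module.End.mul_apply, Module.algebraMap_end_apply, map_smul,
      LinearMap.smul_apply]
    congr 1
    induction n generalizing x y with
    | zero => simp
    | succ n ih => rw [pow_succ, Module.End.mul_apply, ih, D.ha, ← pow_succ, pow_succ', Module.End.mul_apply]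

theorem Dat.com {f : LinearMap.BilinForm K V} {a N : Module.End K V} (D : Dat f a N) (r : K[X]) (x : V) :
    N (aeval a r x) = aeval a r (N x) := by
  have h : Commute N a := by ext x; exact (D.hc x).symm
  have : Commute N (aeval a r) := by
    induction r using Polynomial.induction_on' with
    | add p q hp hq => rw [map_add]; exact hp.add_right hq
    | monomial n c =>
      rw [aeval_monomial]
      exact (show Commute N (algebraMap K (Module.End K V) c) from (Algebra.commutes c N).symm).mul_right
        (h.pow_right n)
  exact LinearMap.congr_fun this x

theorem Dat.NN {f : LinearMap.BilinForm K V} {a N : Module.End K V} (D : Dat f a N) (x : V) :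
    N (N x) = aeval a (X ^ 2 - C 4 : K[X]) x := by
  rw [D.hN2]; simp [pow_two]

theorem Dat.lam {f : LinearMap.BilinForm K V} {a N : Module.End K V} (D : Dat f a N) (r s : K[X]) (x y : V) :
    f (aeval a r x) (aeval a s y) = f (aeval a (r * s) x) y := by
  rw [mul_comm, aev_mul, D.adj s]

theorem Dat.skew {f : LinearMap.BilinForm K V} {a N : Module.End K V} (D : Dat f a N) (r : K[X]) (x y : V) :
    f (aeval a r x) (N y) = - f (aeval a r (N x)) y := by
  rw [← D.com, D.hN, neg_neg]

theorem Dat.skew0 {f : LinearMap.BilinForm K V} {a N : Module.End K V} (D : Dat f a N)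
    (h2 : (2 : K) ≠ 0) (r : K[X]) (x : V) : f (aeval a r x) (N x) = 0 := by
  have h1 := D.skew r x x
  rw [D.adj r (N x), D.hs.eq (N x)] at h1
  have : 2 * f (aeval a r x) (N x) = 0 := by linear_combination h1
  simpa [h2] using this

theorem Dat.skew0' {f : LinearMap.BilinForm K V} {a N : Module.End K V} (D : Dat f a N)
    (h2 : (2 : K) ≠ 0) (r : K[X]) (x : V) : f (aeval a r (N x)) x = 0 := by
  have h1 := D.skew r x x
  rw [D.skew0 h2] at h1
  linear_combination h1

theorem Dat.NNlam {f : LinearMap.BilinForm K V} {a N : Module.End K V} (D : Dat f a N)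
    (r : K[X]) (x y : V) :
    f (aeval a r (N x)) (N y) = - f (aeval a (r * (X ^ 2 - C 4)) x) y := by
  rw [D.skew, D.NN, aev_mul]

theorem key (ν : K[X] →ₗ[K] K) (π : K[X]) (hπ : Irreducible π) (t : ℕ)
    (hk : ∀ r, ν (π ^ t * r) = 0) (hne : t = 0 ∨ ∃ h, ν (π ^ (t - 1) * h) ≠ 0) (r : K[X])
    (hr : ∀ s, ν (r * s) = 0) : π ^ t ∣ r := by
  have : ∀ i ≤ t, π ^ i ∣ r := by
    intro i
    induction i with
    | zero => intro _; simp
    | succ i ih =>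
      intro hi
      obtain ⟨r', hr'⟩ := ih (by omega)
      obtain ⟨h, hh⟩ := hne.resolve_left (by omega)
      by_cases hd : π ∣ r'
      · obtain ⟨r'', rfl⟩ := hd
        exact ⟨r'', by rw [hr']; ring⟩
      · exfalso
        obtain ⟨x, y, hxy⟩ := (hπ.coprime_iff_not_dvd.2 hd)
        apply hh
        have : π ^ (t - 1) * h = π ^ t * (x * h) + r * (π ^ (t - 1 - i) * y * h) := by
          have e1 : π ^ t = π ^ (t - 1) * π := by rw [← pow_succ]; congr 1; omega
          have e2 : π ^ (t - 1) = π ^ i * π ^ (t - 1 - i) := by rw [← pow_add]; congr 1; omega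
          rw [hr', e1]
          calc _ = π ^ (t - 1) * h * (x * π + y * r') := by rw [hxy, mul_one]
            _ = π ^ (t - 1) * π * (x * h) + π ^ (t - 1) * r' * y * h := by ring
            _ = _ := by congr 1; rw [e2]; ring
        rw [this, map_add, hk, hr, add_zero]
  exact this t le_rfl

/-- functional attached to two vectors -/
noncomputable def fnl (f : LinearMap.BilinForm K V) (a : Module.End K V) (v w : V) : K[X] →ₗ[K] K :=
  f.flip w ∘ₗ LinearMap.applyₗ v ∘ₗ (aeval a : K[X] →ₐ[K] Module.End K V).toLinearMap

theorem fnl_apply (f : LinearMap.BilinForm K V) (a : Module.End K V) (v w : V) (r : K[X]) :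
    fnl f a v w r = f (aeval a r v) w := by simp [fnl]

theorem finrank_Cy (a : Module.End K V) (v : V) (p : K[X])
    (h : ∀ r, aeval a r v = 0 ↔ p ∣ r) : finrank K (Cy a v) = p.natDegree := by
  rw [← finrank_quotient_span_eq_natDegree (K := K) (f := p)]
  set L := (LinearMap.applyₗ v ∘ₗ (aeval a : K[X] →ₐ[K] Module.End K V).toLinearMap) with hL
  have hker : LinearMap.ker L = (Ideal.span {p}).restrictScalars K := by
    ext r
    simp [hL, h, Ideal.mem_span_singleton]
  have e1 := L.quotKerEquivRange
  change finrank K (LinearMap.range L) = _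
  rw [← e1.finrank_eq]
  exact ((Submodule.quotEquivOfEq _ _ hker).trans
    (Submodule.Quotient.restrictScalarsEquiv K (Ideal.span {p}))).finrank_eq

variable {f : LinearMap.BilinForm K V} {a N : Module.End K V}

/-- cyclic nondegenerate situation -/
def CycH (f : LinearMap.BilinForm K V) (a : Module.End K V) (π : K[X]) (t : ℕ) (v : V) : Prop :=
  aeval a (π ^ t) v = 0 ∧ (t = 0 ∨ ∃ h, f (aeval a (π ^ (t - 1) * h) v) v ≠ 0)

theorem CycH.zero {π : K[X]} {t : ℕ} {v : V} (h : CycH f a π t v) (r : K[X]) :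
    aeval a (π ^ t * r) v = 0 := by
  rw [mul_comm, aev_mul, h.1, map_zero]

theorem CycH.dvd {π : K[X]} (hπ : Irreducible π) {t : ℕ} {v : V} (h : CycH f a π t v) (r : K[X])
    (hr : ∀ s, f (aeval a (r * s) v) v = 0) : π ^ t ∣ r := by
  refine key (fnl f a v v) π hπ t (fun r => ?_) ?_ r fun s => ?_
  · rw [fnl_apply, h.zero]; simp
  · simpa only [fnl_apply] using h.2
  · rw [fnl_apply, hr]

theorem CycH.iff {π : K[X]} (hπ : Irreducible π) {t : ℕ} {v : V} (h : CycH f a π t v) (r : K[X]) :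
    aeval a r v = 0 ↔ π ^ t ∣ r := by
  constructor
  · intro h0
    refine h.dvd hπ r fun s => ?_
    rw [mul_comm, aev_mul, h0]; simp
  · rintro ⟨s, rfl⟩
    exact h.zero s

theorem CycH.finrank {π : K[X]} (hπ : Irreducible π) {t : ℕ} {v : V} (h : CycH f a π t v) :
    finrank K (Cy a v) = t * π.natDegree := by
  rw [finrank_Cy a v (π ^ t) (h.iff hπ), natDegree_pow]

theorem CycH.nd (D : Dat f a N) {π : K[X]} (hπ : Irreducible π) {t : ℕ} {v : V} (h : CycH f a π t v) :
    ND f (Cy a v) := by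
  intro x hx hxy
  obtain ⟨r, rfl⟩ := mem_Cy.1 hx
  rw [h.iff hπ]
  refine h.dvd hπ r fun s => ?_
  rw [← D.lam]
  exact hxy _ (Cy_mem a v s)

/-- multiples of p in a cyclic subspace are cyclic -/
theorem mem_Cy_mul {p : K[X]} {v x : V} : x ∈ Cy a (aeval a p v) ↔ ∃ r : K[X], aeval a (p * r) v = x := by
  rw [mem_Cy]
  simp only [mul_comm p, aev_mul]

variable [Fintype K] [DecidableEq K] [FiniteDimensional K V]

theorem CycH.even (D : Dat f a N) (h2 : (2 : K) ≠ 0) (hm : IsSquare (-1 : K))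
    {π : K[X]} (hπ : Irreducible π) {t : ℕ} {v : V} (h : CycH f a π t v) (ht : t % 2 = 0) :
    Lab f (Cy a v) 0 1 := by
  obtain ⟨s, rfl⟩ : ∃ s, t = s + s := ⟨t / 2, by omega⟩
  refine Lab_lagr f D.hs h2 hm _ (Cy a v) (Cy a (aeval a (π ^ s) v)) rfl (h.nd D hπ) ?_ ?_ ?_
  · intro x hx
    obtain ⟨r, rfl⟩ := mem_Cy_mul.1 hx
    exact Cy_mem _ _ _
  · intro x hx y hy
    obtain ⟨r, rfl⟩ := mem_Cy_mul.1 hx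
    obtain ⟨r', rfl⟩ := mem_Cy_mul.1 hy
    rw [D.lam, show π ^ s * r * (π ^ s * r') = π ^ (s + s) * (r * r') by ring, h.zero]; simp
  · intro x hx hxy
    obtain ⟨r, rfl⟩ := mem_Cy.1 hx
    have h3 : π ^ (s + s) ∣ r * π ^ s := by
      refine h.dvd hπ _ fun u => ?_
      rw [mul_assoc, ← D.lam]
      exact hxy _ (mem_Cy_mul.2 ⟨u, rfl⟩)
    rw [pow_add] at h3
    obtain ⟨u, rfl⟩ := (mul_dvd_mul_iff_right (pow_ne_zero s hπ.ne_zero)).1 h3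
    exact mem_Cy_mul.2 ⟨u, rfl⟩

theorem Lab_fam (hs : f.IsSymm) (h2 : (2 : K) ≠ 0) {ι : Type*} [Fintype ι] [DecidableEq ι] (y : ι → V)
    (hd : (Matrix.of fun i j => f (y i) (y j)).det ≠ 0) :
    Lab f (Submodule.span K (Set.range y)) (Fintype.card ι % 2)
      (quadraticChar K (Matrix.of fun i j => f (y i) (y j)).det) := by
  have h0 : ∀ c : ι → K, (∀ j, f (∑ i, c i • y i) (y j) = 0) → c = 0 := by
    intro c hc
    refine Matrix.eq_zero_of_vecMul_eq_zero hd ?_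
    ext j
    have := hc j
    simpa [Matrix.vecMul, dotProduct] using this
  have hli : LinearIndependent K y := by
    rw [Fintype.linearIndependent_iff]
    intro c hc
    have := h0 c (fun j => by rw [hc]; simp)
    intro i; rw [this]; rfl
  have hnd : ND f (Submodule.span K (Set.range y)) := by
    intro x hx hxy
    obtain ⟨c, rfl⟩ := (Submodule.mem_span_range_iff_exists_fun K).1 hx
    have := h0 c (fun j => hxy _ (Submodule.subset_span ⟨j, rfl⟩))
    rw [this]; simp
  have := Lab_gram f hs h2 hnd (Basis.span hli)
  simpa [Basis.span_apply] using this

end Cyc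


section Gram
variable {K F : Type*} [Field K] [Field F] [Algebra K F]
  {ι : Type*} [Fintype ι] [DecidableEq ι]

/-- Gram matrix of a functional -/
noncomputable def gm (b : Basis ι K F) (μ : F →ₗ[K] K) : Matrix ι ι K :=
  Matrix.of fun i j => μ (b i * b j)

theorem gm_zero {ι : Type*} (b : Basis ι K F) (μ : F →ₗ[K] K) (hμ : μ ≠ 0) (x : F) (hx : ∀ j, μ (x * b j) = 0) :
    x = 0 := by
  by_contra hne
  apply hμ
  have h1 : μ ∘ₗ LinearMap.mulLeft K x = 0 := b.ext fun j => by simpa using hx j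
  ext y
  have := LinearMap.congr_fun h1 (x⁻¹ * y)
  simpa [mul_inv_cancel_left₀ hne] using this

theorem gm_det (b : Basis ι K F) (μ : F →ₗ[K] K) (hμ : μ ≠ 0) : (gm b μ).det ≠ 0 := by
  intro h
  obtain ⟨c, hc, hc0⟩ := Matrix.exists_vecMul_eq_zero_iff.2 h
  have h1 : ∑ i, c i • b i = 0 := by
    refine gm_zero b μ hμ _ fun j => ?_
    have := congrFun hc0 j
    simpa [Matrix.vecMul, dotProduct, gm, Finset.sum_mul] using this
  apply hc
  funext i
  have := congrArg (fun z => b.repr z i) h1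
  simpa [Finsupp.single_apply] using this

theorem gm_mul (b : Basis ι K F) (μ : F →ₗ[K] K) (c : F) :
    (gm b (μ ∘ₗ LinearMap.mulLeft K c)).det = Algebra.norm K c * (gm b μ).det := by
  rw [Algebra.norm_eq_matrix_det b, ← Matrix.det_transpose (Algebra.leftMulMatrix b c), ← Matrix.det_mul]
  congr 1
  ext i j
  simp only [gm, Matrix.of_apply, Matrix.mul_apply, Matrix.transpose_apply,
    Algebra.leftMulMatrix_eq_repr_mul, LinearMap.comp_apply, LinearMap.mulLeft_apply]
  conv_lhs => rw [← mul_assoc, ← b.sum_repr (c * b i), Finset.sum_mul, map_sum]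
  simp
end Gram

section Odd
variable {K V : Type*} [Field K] [AddCommGroup V] [Module K V]
variable {f : LinearMap.BilinForm K V} {a N : Module.End K V}

theorem exists_mu {π : K[X]} (hm : π.Monic) {t : ℕ} (ht : 0 < t) {v : V} (h : aeval a (π ^ t) v = 0) :
    ∃ μ : AdjoinRoot π →ₗ[K] K, ∀ g, μ (AdjoinRoot.mk π g) = f (aeval a (π ^ (t - 1) * g) v) v := by
  refine ⟨fnl f a v v ∘ₗ LinearMap.mulLeft K (π ^ (t - 1)) ∘ₗ AdjoinRoot.modByMonicHom hm, fun g => ?_⟩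
  simp only [LinearMap.comp_apply, AdjoinRoot.modByMonicHom_mk, LinearMap.mulLeft_apply, fnl_apply]
  conv_rhs => rw [← modByMonic_add_div g π, mul_add, ← mul_assoc, ← pow_succ,
    Nat.sub_add_cancel ht, map_add, LinearMap.add_apply, mul_comm (π ^ t), aev_mul a _ (π ^ t), h]
  simp

variable [Fintype K] [DecidableEq K] [FiniteDimensional K V]

theorem CycH.odd (D : Dat f a N) (h2 : (2 : K) ≠ 0) (hsq : IsSquare (-1 : K))
    {π : K[X]} [Fact (Irreducible π)] (hm : π.Monic) {s : ℕ} {v : V} (h : CycH f a π (2 * s + 1) v)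
    (μ : AdjoinRoot π →ₗ[K] K)
    (hμ : ∀ g, μ (AdjoinRoot.mk π g) = f (aeval a (π ^ (2 * s) * g) v) v) :
    Lab f (Cy a v) (π.natDegree % 2) (quadraticChar K (gm (AdjoinRoot.powerBasis' hm).basis μ).det) := by
  have hπ : Irreducible π := Fact.out
  set b := (AdjoinRoot.powerBasis' hm).basis with hb
  have hbi : ∀ i, b i = AdjoinRoot.mk π (X ^ (i : ℕ)) := by
    intro i; rw [hb, PowerBasis.basis_eq_pow]; simp
  have hμ0 : μ ≠ 0 := by
    rintro rfl
    obtain ⟨g, hg⟩ := h.2.resolve_left (by omega)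
    apply hg
    have := hμ g
    simp only [LinearMap.zero_apply] at this
    rw [this]; rfl
  set y : Fin (AdjoinRoot.powerBasis' hm).dim → V := fun i => aeval a (π ^ s * X ^ (i : ℕ)) v with hy
  have hG : (Matrix.of fun i j => f (y i) (y j)) = gm b μ := by
    ext i j
    simp only [Matrix.of_apply, gm, hbi, ← map_mul, hμ, hy]
    rw [D.lam, show π ^ s * X ^ (i : ℕ) * (π ^ s * X ^ (j : ℕ)) =
      π ^ (2 * s) * (X ^ (i : ℕ) * X ^ (j : ℕ)) by ring]
  have hL := Lab_fam D.hs h2 y (by rw [hG]; exact gm_det b μ hμ0)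
  rw [hG, Fintype.card_fin] at hL
  replace hL : Lab f _ (π.natDegree % 2) _ := hL
  set Y := Submodule.span K (Set.range y) with hY
  have hYU : Y ≤ Cy a v := by
    rw [hY, Submodule.span_le]
    rintro _ ⟨i, rfl⟩
    exact Cy_mem a v _
  have hYND := Lab_ND f D.hs hL
  obtain ⟨e, hND⟩ := ND_split f D.hs (h.nd D hπ) hYND hYU
  have horth : ∀ x, x ∈ f.orthogonal Y ↔ ∀ i, f x (y i) = 0 := by
    intro x
    constructor
    · intro hx i
      rw [D.hs.eq]
      exact hx (y i) (Submodule.subset_span ⟨i, rfl⟩)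
    · intro hx z hz
      change f z x = 0
      rw [D.hs.eq]
      have : Y ≤ LinearMap.ker (f x) := by
        rw [hY, Submodule.span_le]
        rintro _ ⟨i, rfl⟩
        exact hx i
      exact this hz
  have hL2 : Lab f (Cy a v ⊓ f.orthogonal Y) 0 1 := by
    refine Lab_lagr f D.hs h2 hsq _ _ (Cy a (aeval a (π ^ (s + 1)) v)) rfl hND ?_ ?_ ?_
    · intro x hx
      obtain ⟨r, rfl⟩ := mem_Cy_mul.1 hx
      refine ⟨Cy_mem _ _ _, (horth _).2 fun i => ?_⟩
      rw [hy]
      simp only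
      rw [D.lam, show π ^ (s + 1) * r * (π ^ s * X ^ (i : ℕ)) = π ^ (2 * s + 1) * (r * X ^ (i : ℕ)) by ring,
        h.zero]; simp
    · intro x hx z hz
      obtain ⟨r, rfl⟩ := mem_Cy_mul.1 hx
      obtain ⟨r', rfl⟩ := mem_Cy_mul.1 hz
      rw [D.lam, show π ^ (s + 1) * r * (π ^ (s + 1) * r') = π ^ (2 * s + 1) * (π * r * r') by ring,
        h.zero]; simp
    · rintro x ⟨hx, hxo⟩ hxy
      obtain ⟨r, rfl⟩ := mem_Cy.1 hx
      have h3 : π ^ (2 * s + 1) ∣ r * π ^ (s + 1) := by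
        refine h.dvd hπ _ fun u => ?_
        rw [mul_assoc, ← D.lam]
        exact hxy _ (mem_Cy_mul.2 ⟨u, rfl⟩)
      rw [show 2 * s + 1 = s + (s + 1) by ring, pow_add] at h3
      obtain ⟨u, rfl⟩ := (mul_dvd_mul_iff_right (pow_ne_zero (s + 1) hπ.ne_zero)).1 h3
      have h4 : AdjoinRoot.mk π u = 0 := by
        refine gm_zero b μ hμ0 _ fun j => ?_
        rw [hbi, ← map_mul, hμ, ← (horth _).1 hxo j, hy]
        simp only
        rw [D.lam, show π ^ s * u * (π ^ s * X ^ (j : ℕ)) =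
          π ^ (2 * s) * (u * X ^ (j : ℕ)) by ring]
      obtain ⟨w, rfl⟩ := AdjoinRoot.mk_eq_zero.1 h4
      exact mem_Cy_mul.2 ⟨w, by rw [pow_succ, mul_assoc]⟩
  have := Lab_sup f hL hL2 (fun x hx z hz => hz.2 x hx)
  rw [e] at this
  simpa using this

end Odd


section Ind
variable {K V : Type*} [Field K] [AddCommGroup V] [Module K V]

/-- eigenspaces of a reversing involution -/
structure Good (f : LinearMap.BilinForm K V) (a N : Module.End K V) (P M : Submodule K V) : Prop where
  orth : ∀ x ∈ P, ∀ y ∈ M, f x y = 0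
  aP : ∀ x ∈ P, a x ∈ P
  aM : ∀ x ∈ M, a x ∈ M
  NP : ∀ x ∈ P, N x ∈ M
  NM : ∀ x ∈ M, N x ∈ P

/-- invariant odd-dimensional nondegenerate subspace -/
def OddS (f : LinearMap.BilinForm K V) (a N : Module.End K V) : Prop :=
  ∃ U : Submodule K V, (∀ x ∈ U, a x ∈ U) ∧ (∀ x ∈ U, N x ∈ U) ∧ ND f U ∧ finrank K U % 2 = 1

/-- orthogonal indecomposability -/
def Ind (f : LinearMap.BilinForm K V) (a N : Module.End K V) : Prop :=
  ∀ W : Submodule K V, (∀ x ∈ W, a x ∈ W) → (∀ x ∈ W, N x ∈ W) → ND f W → W = ⊥ ∨ W = ⊤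

variable {f : LinearMap.BilinForm K V} {a N : Module.End K V}

theorem inv_sup {P M : Submodule K V} {g : Module.End K V} {P' M' : Submodule K V}
    (h : ∀ x ∈ P, g x ∈ P') (h' : ∀ x ∈ M, g x ∈ M') : ∀ x ∈ P ⊔ M, g x ∈ P' ⊔ M' := by
  intro x hx
  obtain ⟨p, hp, m, hm, rfl⟩ := Submodule.mem_sup.1 hx
  rw [map_add]
  exact Submodule.add_mem_sup (h p hp) (h' m hm)

theorem Good.symm (hs : f.IsSymm) {P M : Submodule K V} (h : Good f a N P M) : Good f a N M P :=
  ⟨fun x hx y hy => by rw [hs.eq]; exact h.orth y hy x hx, h.aM, h.aP, h.NM, h.NP⟩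

theorem Good.top [FiniteDimensional K V] (D : Dat f a N) (hI : Ind f a N) {P M : Submodule K V}
    (h : Good f a N P M) (hP : ND f P) (hM : ND f M) {v : V} (hv : v ∈ P ⊔ M) (h0 : v ≠ 0) :
    P ⊔ M = ⊤ ∧ finrank K V = finrank K P + finrank K M := by
  have h1 : P ⊔ M = ⊤ := by
    refine (hI (P ⊔ M) (inv_sup h.aP h.aM) ?_ (ND_sup f D.hs hP hM h.orth)).resolve_left ?_
    · have := inv_sup h.NP h.NM
      rwa [sup_comm M P] at this
    · intro h1
      rw [h1] at hv
      exact h0 (by simpa using hv)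
  refine ⟨h1, ?_⟩
  have h3 := Submodule.finrank_sup_add_finrank_inf_eq P M
  rw [h1, (ND_disj f D.hs hP h.orth).eq_bot] at h3
  simpa using h3

theorem exists_pi [FiniteDimensional K V] [Nontrivial V] (D : Dat f a N) (hI : Ind f a N) :
    ∃ π : K[X], Irreducible π ∧ π.Monic ∧ ∃ t : ℕ, 0 < t ∧ aeval a (π ^ t) = 0 ∧
      aeval a (π ^ (t - 1)) ≠ 0 := by
  have hint : IsIntegral K a := Algebra.IsIntegral.isIntegral a
  obtain ⟨π, hm, hπ, q, hq⟩ := Polynomial.exists_monic_irreducible_factor (minpoly K a)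
    (minpoly.not_isUnit K a)
  refine ⟨π, hπ, hm, ?_⟩
  have hker : LinearMap.ker (aeval a π) ≠ ⊥ := by
    intro hb
    have hq0 : q ≠ 0 := by
      rintro rfl
      exact minpoly.ne_zero hint (by rw [hq, mul_zero])
    have h1 : aeval a q = 0 := by
      ext x
      have h2 : aeval a π (aeval a q x) = 0 := by
        rw [← aev_mul, ← hq, minpoly.aeval]; rfl
      exact LinearMap.ker_eq_bot'.1 hb _ h2
    have h3 : π * q ∣ 1 * q := by
      rw [one_mul, ← hq]; exact minpoly.dvd K a h1
    exact hπ.not_isUnit (isUnit_of_dvd_one ((mul_dvd_mul_iff_right hq0).1 h3))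
  obtain ⟨k, hk1, hk⟩ : ∃ k, 1 ≤ k ∧
      IsCompl (LinearMap.ker (aeval a π ^ k)) (LinearMap.range (aeval a π ^ k)) :=
    ((Filter.eventually_ge_atTop 1).and
      (LinearMap.eventually_isCompl_ker_pow_range_pow (aeval a π))).exists
  rw [← map_pow] at hk
  have hE : LinearMap.ker (aeval a (π ^ k)) = ⊤ := by
    refine (hI _ ?_ ?_ ?_).resolve_left ?_
    · intro x hx
      rw [LinearMap.mem_ker] at hx ⊢
      have : aeval a (π ^ k) (a x) = aeval a (X * π ^ k) x := by rw [mul_comm, aev_mul]; simp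
      rw [this, aev_mul, hx, map_zero]
    · intro x hx
      rw [LinearMap.mem_ker] at hx ⊢
      rw [← D.com, hx, map_zero]
    · intro x hx hxy
      refine D.nd x trivial fun y _ => ?_
      have hy : y ∈ LinearMap.ker (aeval a (π ^ k)) ⊔ LinearMap.range (aeval a (π ^ k)) := by
        rw [hk.sup_eq_top]; trivial
      obtain ⟨y1, hy1, _, ⟨z, rfl⟩, rfl⟩ := Submodule.mem_sup.1 hy
      rw [map_add, hxy y1 hy1, ← D.adj, LinearMap.mem_ker.1 hx]; simp
    · intro hb
      apply hker
      rw [eq_bot_iff, ← hb]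
      intro x hx
      rw [LinearMap.mem_ker] at hx ⊢
      rw [← Nat.sub_add_cancel hk1, pow_succ, aev_mul, hx, map_zero]
  have hex : ∃ t, aeval a (π ^ t) = 0 := ⟨k, LinearMap.ker_eq_top.1 hE⟩
  classical
  have ht : Nat.find hex ≠ 0 := by
    intro h0
    have := Nat.find_spec hex
    rw [h0] at this
    simp at this
  exact ⟨Nat.find hex, Nat.pos_of_ne_zero ht, Nat.find_spec hex, Nat.find_min hex (by omega)⟩

theorem exists_aniso (D : Dat f a N) (h2 : (2 : K) ≠ 0) (r : K[X]) (hr : aeval a r ≠ 0) :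
    ∃ v, f (aeval a r v) v ≠ 0 := by
  by_contra hcon
  push Not at hcon
  apply hr
  ext v
  refine D.nd _ trivial fun w _ => ?_
  have h1 := hcon (v + w)
  simp only [map_add, LinearMap.add_apply, hcon] at h1
  rw [D.adj r w v, D.hs.eq w] at h1
  have : 2 * f (aeval a r v) w = 0 := by linear_combination h1
  simpa [h2] using this

/-- good pair from one vector -/
theorem good_one (D : Dat f a N) (h2 : (2 : K) ≠ 0) (v : V) : Good f a N (Cy a (N v)) (Cy a v) := by
  refine ⟨?_, Cy_inv a _, Cy_inv a _, ?_, ?_⟩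
  · intro x hx y hy
    obtain ⟨r, rfl⟩ := mem_Cy.1 hx
    obtain ⟨s, rfl⟩ := mem_Cy.1 hy
    rw [D.lam, D.skew0' h2]
  · intro x hx
    obtain ⟨r, rfl⟩ := mem_Cy.1 hx
    rw [D.com, D.NN, ← aev_mul]
    exact Cy_mem _ _ _
  · intro x hx
    obtain ⟨r, rfl⟩ := mem_Cy.1 hx
    rw [D.com]
    exact Cy_mem _ _ _

variable [Fintype K] [DecidableEq K]

/-- achievable labels -/
def TT (f : LinearMap.BilinForm K V) (a N : Module.End K V) (e : ℕ) (δ : ℤ) : Prop :=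
  ∃ P M, Good f a N P M ∧ P ⊔ M = ⊤ ∧ Lab f M e δ

/-- the inductive statement -/
def QQ (f : LinearMap.BilinForm K V) (a N : Module.End K V) : Prop :=
  (finrank K V % 4 = 0 ∧ TT f a N 0 1) ∨
  (finrank K V % 4 = 2 ∧ TT f a N 1 1 ∧ TT f a N 1 (-1)) ∨
  (OddS f a N ∧ TT f a N 0 1 ∧ ∃ δ, TT f a N 1 δ)

variable [FiniteDimensional K V]

/-- generic case -/
theorem generic (D : Dat f a N) (hI : Ind f a N) (h2 : (2 : K) ≠ 0) (hsq : IsSquare (-1 : K))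
    {π : K[X]} (hπ : Irreducible π) (hm : π.Monic) {t : ℕ} (ht : 0 < t) (h0 : aeval a (π ^ t) = 0)
    (h1 : aeval a (π ^ (t - 1)) ≠ 0) (hnd : ¬ π ∣ X ^ 2 - C 4) : QQ f a N := by
  have hF : Fact (Irreducible π) := ⟨hπ⟩
  obtain ⟨p, q, hpq⟩ := hπ.coprime_iff_not_dvd.2 hnd
  have main : ∀ v h, f (aeval a (π ^ (t - 1) * h) v) v ≠ 0 →
      CycH f a π t v ∧ finrank K V = 2 * (t * π.natDegree) ∧
        ∀ e δ, Lab f (Cy a v) e δ → TT f a N e δ := by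
    intro v h hv
    have c1 : CycH f a π t v := ⟨by rw [h0]; rfl, Or.inr ⟨h, hv⟩⟩
    have c2 : CycH f a π t (N v) := by
      refine ⟨by rw [h0]; rfl, Or.inr ⟨h * q, fun h3 => hv ?_⟩⟩
      rw [D.NNlam, neg_eq_zero] at h3
      have e1 : π ^ (t - 1) * h = π ^ (t - 1) * (h * q) * (X ^ 2 - C 4) + π ^ t * (h * p) := by
        have e1 : π ^ t = π ^ (t - 1) * π := by rw [← pow_succ]; congr 1; omega
        rw [e1]; linear_combination (-π ^ (t - 1) * h) * hpq
      rw [e1, map_add, LinearMap.add_apply, c1.zero, add_zero, h3]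
    have hg := good_one D h2 v
    have hv0 : v ≠ 0 := by rintro rfl; simp at hv
    obtain ⟨ht1, ht2⟩ := hg.top D hI (c2.nd D hπ) (c1.nd D hπ)
      (Submodule.mem_sup_right (Cy_self a v)) hv0
    refine ⟨c1, ?_, fun e δ hL => ⟨_, _, hg, ht1, hL⟩⟩
    rw [ht2, c1.finrank hπ, c2.finrank hπ]; ring
  obtain ⟨v, hv⟩ := exists_aniso D h2 _ h1
  obtain ⟨c, hdim, hT⟩ := main v 1 (by simpa using hv)
  rcases Nat.even_or_odd' t with ⟨s, hs | hs⟩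
  · left
    refine ⟨?_, hT 0 1 (c.even D h2 hsq hπ (by omega))⟩
    rw [hdim, hs, show 2 * (2 * s * π.natDegree) = 4 * (s * π.natDegree) by ring]; omega
  · subst hs
    have hfin : FiniteDimensional K (AdjoinRoot π) := (AdjoinRoot.powerBasis' hm).finite
    have hfi : Finite (AdjoinRoot π) := Module.finite_of_finite K
    have hft : Fintype (AdjoinRoot π) := Fintype.ofFinite _
    obtain ⟨μ, hμ⟩ := exists_mu (f := f) hm ht c.1
    set b := (AdjoinRoot.powerBasis' hm).basis
    have hμ0 : μ ≠ 0 := by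
      rintro rfl
      have := hμ 1
      simp only [LinearMap.zero_apply] at this
      apply hv
      rw [this]; simp
    have hdet := gm_det b μ hμ0
    have all : ∀ δ : ℤ, δ = 1 ∨ δ = -1 → TT f a N (π.natDegree % 2) δ := by
      intro δ hδ
      obtain ⟨k, hk0, hk⟩ : ∃ k : K, k ≠ 0 ∧ quadraticChar K k = δ := by
        rcases hδ with rfl | rfl
        · exact ⟨1, one_ne_zero, by simp⟩
        · obtain ⟨k, hk⟩ := quadraticChar_exists_neg_one (F := K) (by
            intro h; exact h2 (by simpa [h] using CharP.cast_eq_zero K (ringChar K)))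
          refine ⟨k, ?_, hk⟩
          rintro rfl
          simp at hk
      obtain ⟨c0, hc0⟩ := FiniteField.norm_surjective K (AdjoinRoot π) (k * (gm b μ).det⁻¹)
      obtain ⟨α, β, hαβ⟩ : ∃ α β : K[X], AdjoinRoot.mk π (α ^ 2 - β ^ 2 * (X ^ 2 - C 4)) = c0 := by
        have hne : AdjoinRoot.mk π (X ^ 2 - C 4) ≠ 0 := by
          rw [Ne, AdjoinRoot.mk_eq_zero]; exact hnd
        set m := AdjoinRoot.mk π (X ^ 2 - C 4)
        obtain ⟨x, y, hxy⟩ := FiniteField.exists_root_sum_quadratic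
          (f := (X ^ 2 - C c0 : (AdjoinRoot π)[X])) (g := C (-m) * X ^ 2)
          (by compute_degree!) (by rw [degree_C_mul_X_pow _ (neg_ne_zero.2 hne)]; rfl) (by
            apply FiniteField.odd_card_of_char_ne_two
            intro h
            have h3 : ((2 : ℕ) : AdjoinRoot π) = 0 := by
              rw [← h]; exact CharP.cast_eq_zero _ (ringChar (AdjoinRoot π))
            apply h2
            apply (algebraMap K (AdjoinRoot π)).injective
            rw [map_ofNat, map_zero]
            exact_mod_cast h3)
        obtain ⟨α, rfl⟩ := AdjoinRoot.mk_surjective x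
        obtain ⟨β, rfl⟩ := AdjoinRoot.mk_surjective y
        refine ⟨α, β, ?_⟩
        simp only [eval_sub, eval_mul, eval_pow, eval_X, eval_C] at hxy
        rw [map_sub, map_mul, map_pow, map_pow]
        linear_combination hxy
      set v' := aeval a α v + aeval a β (N v) with hv'
      have hlam : ∀ r, f (aeval a r v') v' = f (aeval a (r * (α ^ 2 - β ^ 2 * (X ^ 2 - C 4))) v) v := by
        intro r
        rw [hv']
        simp only [map_add, LinearMap.add_apply, ← aev_mul]
        rw [D.lam, D.lam, D.lam, D.lam, D.skew0' h2, D.skew0 h2, D.NNlam,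
          mul_sub r, map_sub, LinearMap.sub_apply, map_sub, LinearMap.sub_apply,
          show r * α * α = r * α ^ 2 by ring,
          show r * β * β * (X ^ 2 - C 4) = r * (β ^ 2 * (X ^ 2 - C 4)) by ring]
        ring
      have hμ' : ∀ g, (μ ∘ₗ LinearMap.mulLeft K c0) (AdjoinRoot.mk π g) =
          f (aeval a (π ^ (2 * s) * g) v') v' := by
        intro g
        rw [LinearMap.comp_apply, LinearMap.mulLeft_apply, ← hαβ, ← map_mul, hμ, hlam]
        rw [Nat.add_sub_cancel, mul_comm _ g, ← mul_assoc]
      have hc00 : c0 ≠ 0 := by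
        rintro rfl
        rw [Algebra.norm_zero] at hc0
        exact mul_ne_zero hk0 (inv_ne_zero hdet) hc0.symm
      obtain ⟨g, hg⟩ : ∃ g, f (aeval a (π ^ (2 * s + 1 - 1) * g) v') v' ≠ 0 := by
        by_contra hcon
        push Not at hcon
        apply hμ0
        ext y
        obtain ⟨g, hg⟩ := AdjoinRoot.mk_surjective (c0⁻¹ * y)
        have h5 := hμ' g
        rw [LinearMap.comp_apply, LinearMap.mulLeft_apply, hg, mul_inv_cancel_left₀ hc00] at h5
        rw [h5]
        exact hcon g
      obtain ⟨c', -, hT'⟩ := main v' g hg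
      apply hT'
      have h6 := CycH.odd D h2 hsq hm c' _ hμ'
      rw [gm_mul, hc0, inv_mul_cancel_right₀ hdet, hk] at h6
      exact h6
    rcases Nat.mod_two_eq_zero_or_one π.natDegree with hd | hd
    · left
      rw [hd] at all
      refine ⟨?_, all 1 (Or.inl rfl)⟩
      obtain ⟨d, hd'⟩ : ∃ d, π.natDegree = 2 * d := ⟨π.natDegree / 2, by omega⟩
      rw [hdim, hd', show 2 * ((2 * s + 1) * (2 * d)) = 4 * ((2 * s + 1) * d) by ring]; omega
    · right; left
      rw [hd] at all
      refine ⟨?_, all 1 (Or.inl rfl), all _ (Or.inr rfl)⟩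
      obtain ⟨d, hd'⟩ : ∃ d, π.natDegree = 2 * d + 1 := ⟨π.natDegree / 2, by omega⟩
      rw [hdim, hd', show 2 * ((2 * s + 1) * (2 * d + 1)) = 4 * (2 * s * d + s + d) + 2 by ring]; omega

end Ind


section Spec
variable {K V : Type*} [Field K] [AddCommGroup V] [Module K V]
variable {f : LinearMap.BilinForm K V} {a N : Module.End K V}

theorem pi_fac {κ : K} (hκ : κ ^ 2 = 4) : (X ^ 2 - C 4 : K[X]) = (X - C κ) * (X + C κ) := by
  rw [← hκ, C_pow]; ring

theorem pi_irr (κ : K) : Irreducible (X - C κ) := irreducible_X_sub_C κ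

variable [Fintype K] [DecidableEq K] [FiniteDimensional K V]

theorem specA (D : Dat f a N) (hI : Ind f a N) (h2 : (2 : K) ≠ 0) (hsq : IsSquare (-1 : K))
    {κ : K} (hκ : κ ^ 2 = 4) {t : ℕ} (ht : 0 < t) (h0 : aeval a ((X - C κ) ^ t) = 0)
    (h1 : aeval a ((X - C κ) ^ (t - 1)) ≠ 0)
    (hN : ∀ x, N (aeval a ((X - C κ) ^ (t - 1)) x) = 0) : QQ f a N := by
  have hπ := pi_irr κ
  have hfac := pi_fac hκ
  have hdeg : (X - C κ).natDegree = 1 := natDegree_X_sub_C κ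
  have hκ0 : 2 * κ ≠ 0 := by
    intro h
    rcases mul_eq_zero.1 h with h | h
    · exact h2 h
    · rw [h] at hκ
      have : (2 : K) * 2 = 0 := by linear_combination -hκ
      simp [h2] at this
  set π := (X - C κ) with hπd
  obtain ⟨v, hv⟩ := exists_aniso D h2 _ h1
  have hv0 : v ≠ 0 := by rintro rfl; simp at hv
  have c1 : CycH f a π t v := ⟨by rw [h0]; rfl, Or.inr ⟨1, by simpa using hv⟩⟩
  have c2 : CycH f a π (t - 1) (N v) := by
    refine ⟨by rw [← D.com]; exact hN v, ?_⟩
    by_cases h : t = 1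
    · left; omega
    · right
      refine ⟨1, fun h3 => hv ?_⟩
      rw [D.NNlam, neg_eq_zero, hfac] at h3
      have e1 : π ^ (t - 1 - 1) * 1 * (π * (X + C κ)) = C (2 * κ) * π ^ (t - 1) + π ^ t * 1 := by
        have e1 : π ^ t = π ^ (t - 1) * π := by rw [← pow_succ]; congr 1; omega
        have e2 : π ^ (t - 1) = π ^ (t - 1 - 1) * π := by rw [← pow_succ]; congr 1; omega
        rw [e1, e2, hπd, C_mul, show (C 2 : K[X]) = 2 from rfl]; ring
      rw [e1, map_add, LinearMap.add_apply, c1.zero, add_zero, aev_mul, aeval_C] at h3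
      simp only [Module.algebraMap_end_apply, map_smul, LinearMap.smul_apply, smul_eq_mul] at h3
      exact (mul_eq_zero.1 h3).resolve_left hκ0
  have hg := good_one D h2 v
  have n1 := c1.nd D hπ
  have n2 := c2.nd D hπ
  obtain ⟨ht1, ht2⟩ := hg.top D hI n2 n1 (Submodule.mem_sup_right (Cy_self a v)) hv0
  have d1 := c1.finrank hπ
  have d2 := c2.finrank hπ
  rw [hdeg, mul_one] at d1 d2
  right; right
  refine ⟨⟨⊤, by simp, by simp, D.nd, by rw [finrank_top]; omega⟩, ?_⟩
  obtain ⟨δ, l1⟩ := Lab_exists f D.hs h2 n1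
  obtain ⟨δ', l2⟩ := Lab_exists f D.hs h2 n2
  rcases Nat.mod_two_eq_zero_or_one t with h | h
  · rw [d2, show (t - 1) % 2 = 1 by omega] at l2
    exact ⟨⟨_, _, hg, ht1, c1.even D h2 hsq hπ h⟩,
      δ', ⟨_, _, hg.symm D.hs, by rw [sup_comm]; exact ht1, l2⟩⟩
  · rw [d1, h] at l1
    exact ⟨⟨_, _, hg.symm D.hs, by rw [sup_comm]; exact ht1, c2.even D h2 hsq hπ (by omega)⟩,
      δ, ⟨_, _, hg, ht1, l1⟩⟩

theorem spec_w (D : Dat f a N) 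
    {κ : K} (hκ : κ ^ 2 = 4) {t : ℕ} (ht : 0 < t) (h0 : aeval a ((X - C κ) ^ t) = 0)
    (v : V) (hv : N (aeval a ((X - C κ) ^ (t - 1)) v) ≠ 0) :
    ∃ w, (∀ r : K[X], f (aeval a r v) w = 0) ∧ f (aeval a ((X - C κ) ^ (t - 1)) (N v)) w ≠ 0 := by
  have hπ := pi_irr κ
  have hfac := pi_fac hκ
  set π := (X - C κ) with hπd
  have hz : aeval a (π ^ (t - 1)) (N v) ∉ Cy a v := by
    intro hz
    obtain ⟨r, hr⟩ := mem_Cy.1 hz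
    have hne : aeval a (π ^ (t - 1)) v ≠ 0 := by
      intro h; rw [h, map_zero] at hv; exact hv rfl
    obtain ⟨y, hy⟩ : ∃ y, f (aeval a (π ^ (t - 1)) v) y ≠ 0 := by
      by_contra hcon
      push Not at hcon
      exact hne (D.nd _ trivial fun y _ => hcon y)
    have e1 : π ^ t = π * π ^ (t - 1) := by rw [← pow_succ']; congr 1; omega
    have h3 : π ^ t ∣ π * r := by
      refine key (fnl f a v y) π hπ t (fun s => ?_) (Or.inr ⟨1, ?_⟩) _ fun s => ?_
      · rw [fnl_apply, mul_comm, aev_mul, h0]; simp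
      · rw [fnl_apply, mul_one]; exact hy
      · rw [fnl_apply, show π * r * s = s * π * r by ring, aev_mul, hr, ← aev_mul,
          mul_assoc, ← e1, aev_mul, h0]
        simp
    rw [e1] at h3
    obtain ⟨s, hs⟩ := (mul_dvd_mul_iff_left hπ.ne_zero).1 h3
    -- s acts as a scalar
    have h4 : aeval a r v = (s.eval κ) • aeval a (π ^ (t - 1)) v := by
      obtain ⟨s', hs'⟩ := (X_sub_C_dvd_sub_C_eval (a := κ) (p := s))
      have : r = C (s.eval κ) * π ^ (t - 1) + s' * π ^ t := by
        rw [hs, e1]; linear_combination (π ^ (t - 1)) * hs'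
      conv_lhs => rw [this]
      rw [map_add, LinearMap.add_apply, aev_mul a s', h0, aev_mul]
      simp
    have h5 : N (N (aeval a (π ^ (t - 1)) v)) = 0 := by
      rw [D.NN, hfac, ← aev_mul, show π * (X + C κ) * π ^ (t - 1) = (X + C κ) * π ^ t by rw [e1]; ring,
        aev_mul, h0]; simp
    have h6 : N (aeval a (π ^ (t - 1)) v) = s.eval κ • aeval a (π ^ (t - 1)) v := by
      rw [← h4, hr, D.com]
    rw [h6, map_smul, h6, smul_smul] at h5
    rcases smul_eq_zero.1 h5 with h7 | h7
    · have : s.eval κ = 0 := by simpa using h7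
      apply hv; rw [h6, this, zero_smul]
    · exact hne h7
  by_contra hcon
  push Not at hcon
  apply hz
  rw [← LinearMap.BilinForm.orthogonal_orthogonal (top_ND f D.hs D.nd) D.hs.isRefl (Cy a v)]
  intro w hw
  change f w _ = 0
  rw [D.hs.eq]
  exact hcon w fun r => hw _ (Cy_mem a v r)

theorem spec_adj (D : Dat f a N) (h2 : (2 : K) ≠ 0)
    {κ : K} (hκ : κ ^ 2 = 4) {t : ℕ} (ht : 0 < t) (h0 : aeval a ((X - C κ) ^ t) = 0)
    (v : V) (hw : ∃ w, (∀ r : K[X], f (aeval a r v) w = 0) ∧ f (aeval a ((X - C κ) ^ (t - 1)) (N v)) w ≠ 0)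
    (j : ℕ) (hj : j ≤ t) :
    ∃ w, (∀ r : K[X], f (aeval a r v) w = 0) ∧ f (aeval a ((X - C κ) ^ (t - 1)) (N v)) w ≠ 0 ∧
      ∀ r : K[X], f (aeval a ((X - C κ) ^ (t - j) * r) w) w = 0 := by
  have hfac := pi_fac hκ
  have hz : ∀ p x, aeval a ((X - C κ) ^ t * p) x = 0 := by
    intro p x; rw [mul_comm, aev_mul, h0]; simp
  induction j with
  | zero =>
    obtain ⟨w, hw1, hw2⟩ := hw
    exact ⟨w, hw1, hw2, fun r => by rw [Nat.sub_zero, hz]; simp⟩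
  | succ j ih =>
    obtain ⟨w, w1, w2, w3⟩ := ih (by omega)
    obtain ⟨m, hm⟩ : ∃ m, t = m + j + 1 := ⟨t - j - 1, by omega⟩
    rw [show t - (j + 1) = m by omega]
    rw [show t - j = m + 1 by omega] at w3
    rw [show t - 1 = m + j by omega] at w2 ⊢
    set π := (X - C κ) with hπd
    set B := f (aeval a (π ^ (m + j)) (N v)) w with hB
    set c := - f (aeval a (π ^ m) w) w / (2 * B) with hc
    refine ⟨w + c • aeval a (π ^ j) (N v), fun r => ?_, ?_, fun r => ?_⟩
    · rw [map_add, w1, map_smul, D.lam, D.skew0 h2]; simp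
    · rw [map_add, map_smul, D.lam, D.NNlam, hfac,
        show π ^ (m + j) * π ^ j * (π * (X + C κ)) = π ^ t * (π ^ j * (X + C κ)) by rw [hm]; ring, hz]
      rw [map_zero, LinearMap.zero_apply, neg_zero, smul_zero, add_zero]
      exact w2
    · have t1 : f (aeval a (π ^ m * r) w) w = r.eval κ * f (aeval a (π ^ m) w) w := by
        obtain ⟨r', hr'⟩ := (X_sub_C_dvd_sub_C_eval (a := κ) (p := r))
        have : π ^ m * r = C (r.eval κ) * π ^ m + π ^ (m + 1) * r' := by
          rw [pow_succ]; linear_combination (π ^ m) * hr'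
        rw [this, map_add, LinearMap.add_apply, map_add, LinearMap.add_apply, w3, aev_mul]
        simp
      have t2 : f (aeval a (π ^ m * r) (aeval a (π ^ j) (N v))) w = r.eval κ * B := by
        obtain ⟨r', hr'⟩ := (X_sub_C_dvd_sub_C_eval (a := κ) (p := r))
        have : π ^ m * r * π ^ j = C (r.eval κ) * π ^ (m + j) + π ^ t * r' := by
          rw [hm, pow_succ, pow_add]; linear_combination (π ^ m * π ^ j) * hr'
        rw [← aev_mul, this, map_add, LinearMap.add_apply, map_add, LinearMap.add_apply, hz, aev_mul]
        simp [hB]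
      have t3 : f (aeval a (π ^ m * r) w) (aeval a (π ^ j) (N v)) = r.eval κ * B := by
        rw [← t2, D.adj, D.hs.eq]
      have t4 : f (aeval a (π ^ m * r) (aeval a (π ^ j) (N v))) (aeval a (π ^ j) (N v)) = 0 := by
        rw [← aev_mul, D.lam, D.NNlam, hfac,
          show π ^ m * r * π ^ j * π ^ j * (π * (X + C κ)) = π ^ t * (r * π ^ j * (X + C κ)) by
            rw [hm]; ring, hz]
        simp
      simp only [map_add, map_smul, LinearMap.add_apply, LinearMap.smul_apply, smul_eq_mul]
      rw [t1, t2, t3, t4, hc]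
      field_simp
      ring

theorem specB (D : Dat f a N) (hI : Ind f a N) (h2 : (2 : K) ≠ 0) (hsq : IsSquare (-1 : K))
    {κ : K} (hκ : κ ^ 2 = 4) {t : ℕ} (ht : 0 < t) (h0 : aeval a ((X - C κ) ^ t) = 0)
    (v : V) (hv : N (aeval a ((X - C κ) ^ (t - 1)) v) ≠ 0) : QQ f a N := by
  have hπ := pi_irr κ
  have hfac := pi_fac hκ
  have hdeg : (X - C κ).natDegree = 1 := natDegree_X_sub_C κ
  have hz : ∀ p x, aeval a ((X - C κ) ^ t * p) x = 0 := by
    intro p x; rw [mul_comm, aev_mul, h0]; simp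
  obtain ⟨w, w1, w2, w3⟩ := spec_adj D h2 hκ ht h0 v (spec_w D hκ ht h0 v hv) t le_rfl
  simp only [Nat.sub_self, pow_zero, one_mul] at w3
  set π := (X - C κ) with hπd
  have ky : ∀ r, (∀ s, f (aeval a (r * s) (N v)) w = 0) → π ^ t ∣ r := by
    intro r hr
    refine key (fnl f a (N v) w) π hπ t (fun s => ?_) (Or.inr ⟨1, ?_⟩) _ fun s => ?_
    · rw [fnl_apply, hz]; simp
    · rw [fnl_apply, mul_one]; exact w2
    · rw [fnl_apply, hr]
  -- pairings
  have p1 : ∀ r s : K[X], f (aeval a r v) (aeval a s (N w)) = - f (aeval a (r * s) (N v)) w := by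
    intro r s; rw [D.lam, D.skew]
  have p2 : ∀ r s : K[X], f (aeval a r (N v)) (aeval a s w) = f (aeval a (r * s) (N v)) w := by
    intro r s; rw [D.lam]
  have q1 : ∀ r s : K[X], f (aeval a r v) (aeval a s w) = 0 := by
    intro r s; rw [D.lam, w1]
  have q2 : ∀ r s : K[X], f (aeval a r w) (aeval a s w) = 0 := by
    intro r s; rw [D.lam, w3]
  have q3 : ∀ r s : K[X], f (aeval a r (N w)) (aeval a s (N w)) = 0 := by
    intro r s; rw [D.lam, D.NNlam, w3, neg_zero]
  have q4 : ∀ r s : K[X], f (aeval a r (N v)) (aeval a s (N w)) = 0 := by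
    intro r s; rw [D.lam, D.NNlam, w1, neg_zero]
  have z1 : ∀ r : K[X], aeval a r v = 0 ↔ π ^ t ∣ r := by
    intro r
    refine ⟨fun h => ky r fun s => ?_, by rintro ⟨s, rfl⟩; exact hz _ _⟩
    have := p1 r s
    rw [h] at this; simpa using this.symm
  have z2 : ∀ r : K[X], aeval a r (N v) = 0 ↔ π ^ t ∣ r := by
    intro r
    refine ⟨fun h => ky r fun s => ?_, by rintro ⟨s, rfl⟩; exact hz _ _⟩
    rw [← p2, h]; simp
  have z3 : ∀ r : K[X], aeval a r w = 0 ↔ π ^ t ∣ r := by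
    intro r
    refine ⟨fun h => ky r fun s => ?_, by rintro ⟨s, rfl⟩; exact hz _ _⟩
    rw [mul_comm, ← p2, h]; simp
  have z4 : ∀ r : K[X], aeval a r (N w) = 0 ↔ π ^ t ∣ r := by
    intro r
    refine ⟨fun h => ky r fun s => ?_, by rintro ⟨s, rfl⟩; exact hz _ _⟩
    have := p1 s r
    rw [h, mul_comm] at this; simpa using this.symm
  have hg : Good f a N (Cy a v ⊔ Cy a (N w)) (Cy a (N v) ⊔ Cy a w) := by
    have g1 := good_one D h2 v
    have g2 := good_one D h2 w
    refine ⟨?_, inv_sup g1.aM g2.aP, inv_sup g1.aP g2.aM, inv_sup g1.NM g2.NP, inv_sup g1.NP g2.NM⟩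
    intro x hx y hy
    obtain ⟨x1, hx1, x2, hx2, rfl⟩ := Submodule.mem_sup.1 hx
    obtain ⟨y1, hy1, y2, hy2, rfl⟩ := Submodule.mem_sup.1 hy
    have e1 : f x1 y1 = 0 := by rw [D.hs.eq]; exact g1.orth _ hy1 _ hx1
    have e2 : f x2 y2 = 0 := g2.orth _ hx2 _ hy2
    obtain ⟨r, rfl⟩ := mem_Cy.1 hx1
    obtain ⟨r', rfl⟩ := mem_Cy.1 hx2
    obtain ⟨s, rfl⟩ := mem_Cy.1 hy1
    obtain ⟨s', rfl⟩ := mem_Cy.1 hy2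
    simp only [map_add, LinearMap.add_apply, e1, e2, q1]
    rw [D.hs.eq _ (aeval a s (N v)), q4]; simp
  -- nondegeneracy
  have m1 : ∀ x ∈ Cy a v ⊔ Cy a (N w), (∀ y ∈ Cy a (N w), f x y = 0) → x ∈ Cy a (N w) := by
    intro x hx hxy
    obtain ⟨x1, hx1, x2, hx2, rfl⟩ := Submodule.mem_sup.1 hx
    obtain ⟨r, rfl⟩ := mem_Cy.1 hx1
    obtain ⟨r', rfl⟩ := mem_Cy.1 hx2
    have : aeval a r v = 0 := by
      rw [z1]
      refine ky r fun s => ?_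
      have := hxy _ (Cy_mem a (N w) s)
      rw [map_add, LinearMap.add_apply, p1, q3] at this
      simpa using this
    rw [this, zero_add]; exact hx2
  have m2 : ∀ x ∈ Cy a (N v) ⊔ Cy a w, (∀ y ∈ Cy a w, f x y = 0) → x ∈ Cy a w := by
    intro x hx hxy
    obtain ⟨x1, hx1, x2, hx2, rfl⟩ := Submodule.mem_sup.1 hx
    obtain ⟨r, rfl⟩ := mem_Cy.1 hx1
    obtain ⟨r', rfl⟩ := mem_Cy.1 hx2
    have : aeval a r (N v) = 0 := by
      rw [z2]
      refine ky r fun s => ?_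
      have := hxy _ (Cy_mem a w s)
      rw [map_add, LinearMap.add_apply, p2, q2] at this
      simpa using this
    rw [this, zero_add]; exact hx2
  have n1 : ND f (Cy a v ⊔ Cy a (N w)) := by
    intro x hx hxy
    obtain ⟨r, rfl⟩ := mem_Cy.1 (m1 x hx fun y hy => hxy y (Submodule.mem_sup_right hy))
    rw [z4]
    refine ky r fun s => ?_
    have := hxy _ (Submodule.mem_sup_left (Cy_mem a v s))
    rw [D.hs.eq, p1, mul_comm] at this
    simpa using this
  have n2 : ND f (Cy a (N v) ⊔ Cy a w) := by
    intro x hx hxy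
    obtain ⟨r, rfl⟩ := mem_Cy.1 (m2 x hx fun y hy => hxy y (Submodule.mem_sup_right hy))
    rw [z3]
    refine ky r fun s => ?_
    have := hxy _ (Submodule.mem_sup_left (Cy_mem a (N v) s))
    rw [D.hs.eq, p2, mul_comm] at this
    simpa using this
  have dj1 : Cy a v ⊓ Cy a (N w) = ⊥ := by
    rw [eq_bot_iff]
    rintro x ⟨hx1, hx2⟩
    obtain ⟨r, rfl⟩ := mem_Cy.1 hx1
    obtain ⟨r', hr'⟩ := mem_Cy.1 hx2
    rw [Submodule.mem_bot, z1]
    refine ky r fun s => ?_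
    have := p1 r s
    rw [← hr', q3] at this
    simpa using this.symm
  have dj2 : Cy a (N v) ⊓ Cy a w = ⊥ := by
    rw [eq_bot_iff]
    rintro x ⟨hx1, hx2⟩
    obtain ⟨r, rfl⟩ := mem_Cy.1 hx1
    obtain ⟨r', hr'⟩ := mem_Cy.1 hx2
    rw [Submodule.mem_bot, z2]
    refine ky r fun s => ?_
    rw [← p2, ← hr', q2]
  have hv0 : v ≠ 0 := by rintro rfl; simp at hv
  obtain ⟨ht1, ht2⟩ := hg.top D hI n1 n2
    (Submodule.mem_sup_left (Submodule.mem_sup_left (Cy_self a v))) hv0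
  have f1 := Submodule.finrank_sup_add_finrank_inf_eq (Cy a v) (Cy a (N w))
  have f2 := Submodule.finrank_sup_add_finrank_inf_eq (Cy a (N v)) (Cy a w)
  rw [dj1, finrank_Cy a v _ z1, finrank_Cy a _ _ z4, finrank_bot, natDegree_pow, hdeg] at f1
  rw [dj2, finrank_Cy a _ _ z2, finrank_Cy a _ _ z3, finrank_bot, natDegree_pow, hdeg] at f2
  left
  refine ⟨by omega, _, _, hg, ht1, ?_⟩
  refine Lab_lagr f D.hs h2 hsq _ _ (Cy a w) rfl n2 le_sup_right ?_ m2
  intro x hx y hy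
  obtain ⟨r, rfl⟩ := mem_Cy.1 hx
  obtain ⟨s, rfl⟩ := mem_Cy.1 hy
  exact q2 r s

theorem indec [Nontrivial V] (D : Dat f a N) (hI : Ind f a N) (h2 : (2 : K) ≠ 0)
    (hsq : IsSquare (-1 : K)) : QQ f a N := by
  obtain ⟨π, hπ, hm, t, ht, h0, h1⟩ := exists_pi D hI
  by_cases hd : π ∣ X ^ 2 - C 4
  · obtain ⟨κ, hκ, rfl⟩ : ∃ κ : K, κ ^ 2 = 4 ∧ π = X - C κ := by
      rw [pi_fac (κ := (2 : K)) (by norm_num)] at hd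
      rcases hπ.prime.dvd_or_dvd hd with h | h
      · refine ⟨2, by norm_num, ?_⟩
        exact eq_of_monic_of_associated hm (monic_X_sub_C _) (hπ.associated_of_dvd (pi_irr 2) h)
      · refine ⟨-2, by norm_num, ?_⟩
        rw [show (X + C 2 : K[X]) = X - C (-2) by rw [C_neg]; ring] at h
        exact eq_of_monic_of_associated hm (monic_X_sub_C _) (hπ.associated_of_dvd (pi_irr (-2)) h)
    by_cases hN : ∀ x, N (aeval a ((X - C κ) ^ (t - 1)) x) = 0
    · exact specA D hI h2 hsq hκ ht h0 h1 hN
    · push Not at hN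
      obtain ⟨v, hv⟩ := hN
      exact specB D hI h2 hsq hκ ht h0 v hv
  · exact generic D hI h2 hsq hπ hm ht h0 h1 hd

end Spec


/-- abstract form of the inductive statement -/
def QA (n : ℕ) (T : ℕ → ℤ → Prop) (O : Prop) : Prop :=
  (n % 4 = 0 ∧ T 0 1) ∨ (n % 4 = 2 ∧ T 1 1 ∧ T 1 (-1)) ∨ (O ∧ T 0 1 ∧ ∃ δ, T 1 δ)

theorem QA_glue {n n1 n2 : ℕ} {T T1 T2 : ℕ → ℤ → Prop} {O O1 O2 : Prop} (hn : n = n1 + n2)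
    (hT : ∀ e δ e' δ', T1 e δ → T2 e' δ' → T ((e + e') % 2) (δ * δ')) (h1 : O1 → O) (h2 : O2 → O)
    (d1 : ∀ e δ, T1 e δ → δ = 1 ∨ δ = -1) (d2 : ∀ e δ, T2 e δ → δ = 1 ∨ δ = -1)
    (q1 : QA n1 T1 O1) (q2 : QA n2 T2 O2) : QA n T O := by
  rcases q1 with ⟨a1, a2⟩ | ⟨b1, b2, b3⟩ | ⟨c1, c2, δ, c3⟩ <;>
    rcases q2 with ⟨a1', a2'⟩ | ⟨b1', b2', b3'⟩ | ⟨c1', c2', δ', c3'⟩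
  · exact Or.inl ⟨by omega, hT _ _ _ _ a2 a2'⟩
  · exact Or.inr (Or.inl ⟨by omega, hT _ _ _ _ a2 b2', hT _ _ _ _ a2 b3'⟩)
  · exact Or.inr (Or.inr ⟨h2 c1', hT _ _ _ _ a2 c2', _, hT _ _ _ _ a2 c3'⟩)
  · exact Or.inr (Or.inl ⟨by omega, hT _ _ _ _ b2 a2', hT _ _ _ _ b3 a2'⟩)
  · exact Or.inl ⟨by omega, hT _ _ _ _ b2 b2'⟩
  · refine Or.inr (Or.inr ⟨h2 c1', ?_, _, hT _ _ _ _ b2 c2'⟩)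
    rcases d2 _ _ c3' with rfl | rfl
    · exact hT _ _ _ _ b2 c3'
    · exact hT _ _ _ _ b3 c3'
  · exact Or.inr (Or.inr ⟨h1 c1, hT _ _ _ _ c2 a2', _, hT _ _ _ _ c3 a2'⟩)
  · refine Or.inr (Or.inr ⟨h1 c1, ?_, _, hT _ _ _ _ c2 b2'⟩)
    rcases d1 _ _ c3 with rfl | rfl
    · exact hT _ _ _ _ c3 b2'
    · exact hT _ _ _ _ c3 b3'
  · exact Or.inr (Or.inr ⟨h1 c1, hT _ _ _ _ c2 c2', _, hT _ _ _ _ c2 c3'⟩)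

section Glue
variable {K V : Type*} [Field K] [AddCommGroup V] [Module K V]
variable {f : LinearMap.BilinForm K V} {a N : Module.End K V}

theorem Dat.restr (D : Dat f a N) {W : Submodule K V} (ha : ∀ x ∈ W, a x ∈ W) (hN : ∀ x ∈ W, N x ∈ W)
    (hW : ND f W) : Dat (f.restrict W) (a.restrict ha) (N.restrict hN) where
  hs := ⟨fun x y => D.hs.eq _ _⟩
  nd := fun x _ h => Subtype.ext (hW x x.2 fun y hy => h ⟨y, hy⟩ trivial)
  ha := fun x y => D.ha _ _
  hN := fun x y => D.hN _ _
  hc := fun x => Subtype.ext (D.hc _)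
  hN2 := fun x => Subtype.ext (D.hN2 _)

theorem OddS_map {W : Submodule K V} {ha : ∀ x ∈ W, a x ∈ W} {hN : ∀ x ∈ W, N x ∈ W}
    (h : OddS (f.restrict W) (a.restrict ha) (N.restrict hN)) : OddS f a N := by
  obtain ⟨U, h1, h2, h3, h4⟩ := h
  refine ⟨U.map W.subtype, ?_, ?_, ?_, ?_⟩
  · rintro _ ⟨x, hx, rfl⟩
    exact ⟨_, h1 x hx, rfl⟩
  · rintro _ ⟨x, hx, rfl⟩
    exact ⟨_, h2 x hx, rfl⟩
  · rintro _ ⟨x, hx, rfl⟩ h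
    rw [h3 x hx fun y hy => h _ ⟨y, hy, rfl⟩, map_zero]
  · rw [Submodule.finrank_map_subtype_eq]; exact h4

theorem orth_inv (D : Dat f a N) {W : Submodule K V} (ha : ∀ x ∈ W, a x ∈ W) (hN : ∀ x ∈ W, N x ∈ W) :
    (∀ x ∈ f.orthogonal W, a x ∈ f.orthogonal W) ∧ (∀ x ∈ f.orthogonal W, N x ∈ f.orthogonal W) := by
  constructor
  · intro x hx y hy
    change f y (a x) = 0
    rw [← D.ha]; exact hx _ (ha y hy)
  · intro x hx y hy
    change f y (N x) = 0
    have := D.hN y x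
    rw [show f (N y) x = 0 from hx _ (hN y hy)] at this
    simpa using this.symm

variable [Fintype K] [DecidableEq K]

theorem TT_delta {e : ℕ} {δ : ℤ} (h : TT f a N e δ) : δ = 1 ∨ δ = -1 := by
  obtain ⟨P, M, -, -, h⟩ := h
  exact Lab_delta f h

theorem TT_glue (hs : f.IsSymm) {W W' : Submodule K V} {ha : ∀ x ∈ W, a x ∈ W} {hN : ∀ x ∈ W, N x ∈ W}
    {ha' : ∀ x ∈ W', a x ∈ W'} {hN' : ∀ x ∈ W', N x ∈ W'} (ho : ∀ x ∈ W, ∀ y ∈ W', f x y = 0)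
    (ht : W ⊔ W' = ⊤) (e : ℕ) (δ : ℤ) (e' : ℕ) (δ' : ℤ)
    (h : TT (f.restrict W) (a.restrict ha) (N.restrict hN) e δ)
    (h' : TT (f.restrict W') (a.restrict ha') (N.restrict hN') e' δ') :
    TT f a N ((e + e') % 2) (δ * δ') := by
  obtain ⟨P, M, g, t, l⟩ := h
  obtain ⟨P', M', g', t', l'⟩ := h'
  refine ⟨P.map W.subtype ⊔ P'.map W'.subtype, M.map W.subtype ⊔ M'.map W'.subtype,
    ⟨?_, ?_, ?_, ?_, ?_⟩, ?_, Lab_sup f (Lab_map f W M l) (Lab_map f W' M' l') ?_⟩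
  · intro x hx y hy
    obtain ⟨_, ⟨x1, hx1, rfl⟩, _, ⟨x2, hx2, rfl⟩, rfl⟩ := Submodule.mem_sup.1 hx
    obtain ⟨_, ⟨y1, hy1, rfl⟩, _, ⟨y2, hy2, rfl⟩, rfl⟩ := Submodule.mem_sup.1 hy
    have e1 : f (x1 : V) y1 = 0 := g.orth _ hx1 _ hy1
    have e2 : f (x2 : V) y2 = 0 := g'.orth _ hx2 _ hy2
    have e3 : f (x1 : V) y2 = 0 := ho _ x1.2 _ y2.2
    have e4 : f (x2 : V) y1 = 0 := by rw [hs.eq]; exact ho _ y1.2 _ x2.2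
    simp [e1, e2, e3, e4]
  · refine inv_sup ?_ ?_
    · rintro _ ⟨x, hx, rfl⟩; exact ⟨_, g.aP x hx, rfl⟩
    · rintro _ ⟨x, hx, rfl⟩; exact ⟨_, g'.aP x hx, rfl⟩
  · refine inv_sup ?_ ?_
    · rintro _ ⟨x, hx, rfl⟩; exact ⟨_, g.aM x hx, rfl⟩
    · rintro _ ⟨x, hx, rfl⟩; exact ⟨_, g'.aM x hx, rfl⟩
  · refine inv_sup ?_ ?_
    · rintro _ ⟨x, hx, rfl⟩; exact ⟨_, g.NP x hx, rfl⟩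
    · rintro _ ⟨x, hx, rfl⟩; exact ⟨_, g'.NP x hx, rfl⟩
  · refine inv_sup ?_ ?_
    · rintro _ ⟨x, hx, rfl⟩; exact ⟨_, g.NM x hx, rfl⟩
    · rintro _ ⟨x, hx, rfl⟩; exact ⟨_, g'.NM x hx, rfl⟩
  · rw [sup_sup_sup_comm, ← Submodule.map_sup, ← Submodule.map_sup, t, t', Submodule.map_subtype_top,
      Submodule.map_subtype_top, ht]
  · rintro _ ⟨x, hx, rfl⟩ _ ⟨y, hy, rfl⟩
    exact ho _ x.2 _ y.2

variable [FiniteDimensional K V]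

theorem orth_facts (D : Dat f a N) {W : Submodule K V} (hW : ND f W) :
    W ⊔ f.orthogonal W = ⊤ ∧ ND f (f.orthogonal W) ∧
      finrank K V = finrank K W + finrank K (f.orthogonal W) := by
  obtain ⟨h1, h2⟩ := ND_split f D.hs D.nd hW le_top
  rw [top_inf_eq] at h1 h2
  refine ⟨h1, h2, ?_⟩
  have h3 := Submodule.finrank_sup_add_finrank_inf_eq W (f.orthogonal W)
  rw [h1, (ND_disj f D.hs (B := f.orthogonal W) hW fun x hx y hy => hy x hx).eq_bot] at h3
  simpa using h3

end Glue

theorem main_Q {K : Type*} [Field K] [Fintype K] [DecidableEq K] (h2 : (2 : K) ≠ 0)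
    (hsq : IsSquare (-1 : K)) (n : ℕ) :
    ∀ {V : Type*} [AddCommGroup V] [Module K V] [FiniteDimensional K V]
      (f : LinearMap.BilinForm K V) (a N : Module.End K V), finrank K V = n → Dat f a N →
      QQ f a N := by
  induction n using Nat.strong_induction_on with
  | _ n ih =>
    intro V _ _ _ f a N hn D
    rcases subsingleton_or_nontrivial V with hV | hV
    · left
      refine ⟨by rw [finrank_zero_of_subsingleton], ⊥, ⊥, ⟨?_, ?_, ?_, ?_, ?_⟩, ?_, Lab_bot f⟩
      all_goals first | exact Subsingleton.elim _ _ | simp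
    · by_cases hI : Ind f a N
      · exact indec D hI h2 hsq
      · unfold Ind at hI
        push Not at hI
        obtain ⟨W, ha, hN, hW, hb, ht⟩ := hI
        obtain ⟨o1, o2, o3⟩ := orth_facts D hW
        obtain ⟨ha', hN'⟩ := orth_inv D ha hN
        have l1 : finrank K W ≠ 0 := fun h => hb (Submodule.finrank_eq_zero.1 h)
        have l2 : finrank K W < finrank K V := Submodule.finrank_lt ht
        have q1 := ih _ (by omega) _ _ _ rfl (D.restr ha hN hW)
        have q2 := ih _ (by omega) _ _ _ rfl (D.restr ha' hN' o2)
        exact QA_glue o3 (TT_glue D.hs (W' := f.orthogonal W) (fun x hx y hy => hy x hx) o1) OddS_map OddS_map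
          (fun _ _ => TT_delta) (fun _ _ => TT_delta) q1 q2



section Fin
variable {K V : Type*} [Field K] [AddCommGroup V] [Module K V]

/-- self-adjoint part -/
def sa (φ : V ≃ₗ[K] V) : Module.End K V := φ.toLinearMap + φ.symm.toLinearMap
/-- skew-adjoint part -/
def sk (φ : V ≃ₗ[K] V) : Module.End K V := φ.toLinearMap - φ.symm.toLinearMap

theorem sa_apply (φ : V ≃ₗ[K] V) (x : V) : sa φ x = φ x + φ.symm x := rfl
theorem sk_apply (φ : V ≃ₗ[K] V) (x : V) : sk φ x = φ x - φ.symm x := rfl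

theorem orth_adj {f : LinearMap.BilinForm K V} {φ : V ≃ₗ[K] V} (hφ : φ ∈ orthGroup f) (x y : V) :
    f (φ x) y = f x (φ.symm y) := by
  have := hφ x (φ.symm y)
  rwa [LinearEquiv.apply_symm_apply] at this

theorem orth_adj' {f : LinearMap.BilinForm K V} {φ : V ≃ₗ[K] V} (hφ : φ ∈ orthGroup f) (x y : V) :
    f (φ.symm x) y = f x (φ y) := by
  have := hφ (φ.symm x) y
  rw [LinearEquiv.apply_symm_apply] at this
  exact this.symm

theorem dat_of {f : LinearMap.BilinForm K V} (hs : f.IsSymm) (hn : ND f ⊤) {φ : V ≃ₗ[K] V}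
    (hφ : φ ∈ orthGroup f) : Dat f (sa φ) (sk φ) where
  hs := hs
  nd := hn
  ha := fun x y => by
    simp only [sa_apply, map_add, LinearMap.add_apply, orth_adj hφ, orth_adj' hφ]; ring
  hN := fun x y => by
    simp only [sk_apply, map_sub, LinearMap.sub_apply, orth_adj hφ, orth_adj' hφ]; ring
  hc := fun x => by
    simp only [sa_apply, sk_apply, map_sub, map_add, LinearEquiv.apply_symm_apply,
      LinearEquiv.symm_apply_apply]; abel
  hN2 := fun x => by
    simp only [sa_apply, sk_apply, map_sub, map_add, LinearEquiv.apply_symm_apply,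
      LinearEquiv.symm_apply_apply]; module

theorem two_phi (φ : V ≃ₗ[K] V) (x : V) : (2 : K) • φ x = sa φ x + sk φ x := by
  rw [sa_apply, sk_apply]; module

theorem two_phi_symm (φ : V ≃ₗ[K] V) (x : V) : (2 : K) • φ.symm x = sa φ x - sk φ x := by
  rw [sa_apply, sk_apply]; module

theorem inv_of_dat (h2 : (2 : K) ≠ 0) {φ : V ≃ₗ[K] V} {U : Submodule K V}
    (ha : ∀ x ∈ U, sa φ x ∈ U) (hN : ∀ x ∈ U, sk φ x ∈ U) : Invt (φ : V →ₗ[K] V) U := by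
  intro x hx
  refine (U.smul_mem_iff h2).1 ?_
  change (2 : K) • φ x ∈ U
  rw [two_phi]
  exact U.add_mem (ha x hx) (hN x hx)

theorem dat_of_inv [FiniteDimensional K V] {φ : V ≃ₗ[K] V} {U : Submodule K V}
    (h : Invt (φ : V →ₗ[K] V) U) : (∀ x ∈ U, sa φ x ∈ U) ∧ (∀ x ∈ U, sk φ x ∈ U) := by
  have h1 : U.map (φ : V →ₗ[K] V) = U := by
    apply Submodule.eq_of_le_of_finrank_eq
    · rintro _ ⟨x, hx, rfl⟩; exact h x hx
    · exact LinearEquiv.finrank_map_eq φ U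
  have h3 : ∀ x ∈ U, φ.symm x ∈ U := by
    intro x hx
    rw [← h1] at hx
    obtain ⟨y, hy, rfl⟩ := hx
    simpa using hy
  exact ⟨fun x hx => U.add_mem (h x hx) (h3 x hx), fun x hx => U.sub_mem (h x hx) (h3 x hx)⟩

theorem OddS_indec [Fintype K] [DecidableEq K] [FiniteDimensional K V] (h2 : (2 : K) ≠ 0)
    {f : LinearMap.BilinForm K V} {φ : V ≃ₗ[K] V} (D : Dat f (sa φ) (sk φ))
    (h : OddS f (sa φ) (sk φ)) :
    ∃ (U : Submodule K V) (hU : Invt (φ : V →ₗ[K] V) U),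
            (f.restrict U).Nondegenerate ∧ Odd (Module.finrank K U) ∧
            OrthIndec (f.restrict U) ((φ : V →ₗ[K] V).restrict hU) := by
  have hne : {U : Submodule K V | (∀ x ∈ U, sa φ x ∈ U) ∧ (∀ x ∈ U, sk φ x ∈ U) ∧ ND f U ∧
    finrank K U % 2 = 1}.Nonempty := h
  obtain ⟨U, ⟨ha, hN, hnd, ho⟩, hm⟩ := WellFounded.has_min
    (measure fun U : Submodule K V => finrank K U).wf _ hne
  have key : ∀ S : Submodule K U, (∀ x ∈ S, (sa φ).restrict ha x ∈ S) →
      (∀ x ∈ S, (sk φ).restrict hN x ∈ S) → ND (f.restrict U) S → finrank K S % 2 = 1 →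
      finrank K U ≤ finrank K S := by
    intro S s1 s2 s3 s4
    have := hm (S.map U.subtype) ⟨?_, ?_, ?_, ?_⟩
    · have h : ¬ finrank K (S.map U.subtype) < finrank K U := this
      rw [Submodule.finrank_map_subtype_eq] at h
      omega
    · rintro _ ⟨x, hx, rfl⟩
      exact ⟨_, s1 x hx, rfl⟩
    · rintro _ ⟨x, hx, rfl⟩
      exact ⟨_, s2 x hx, rfl⟩
    · rintro _ ⟨x, hx, rfl⟩ h
      rw [s3 x hx fun y hy => h _ ⟨y, hy, rfl⟩, map_zero]
    · rw [Submodule.finrank_map_subtype_eq]; exact s4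
  have D' := D.restr ha hN hnd
  refine ⟨U, inv_of_dat h2 ha hN, (ND_restrict f D.hs U).1 hnd, Nat.odd_iff.2 ho, ?_, ?_⟩
  · intro hb
    have := congrArg (fun W : Submodule K U => finrank K W) hb
    simp at this
    omega
  · intro S hS hSn
    have hSn' := (ND_restrict _ D'.hs S).2 hSn
    have hS1 : Invt (φ : V →ₗ[K] V) (S.map U.subtype) := by
      rintro _ ⟨x, hx, rfl⟩
      exact ⟨_, hS x hx, rfl⟩
    obtain ⟨i1, i2⟩ := dat_of_inv hS1
    have s1 : ∀ x ∈ S, (sa φ).restrict ha x ∈ S := by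
      intro x hx
      obtain ⟨y, hy, e⟩ := i1 x ⟨x, hx, rfl⟩
      have : (sa φ).restrict ha x = y := Subtype.ext e.symm
      rwa [this]
    have s2 : ∀ x ∈ S, (sk φ).restrict hN x ∈ S := by
      intro x hx
      obtain ⟨y, hy, e⟩ := i2 x ⟨x, hx, rfl⟩
      have : (sk φ).restrict hN x = y := Subtype.ext e.symm
      rwa [this]
    obtain ⟨-, o2, o3⟩ := orth_facts D' hSn'
    obtain ⟨t1, t2⟩ := orth_inv D' s1 s2
    by_cases hp : finrank K S % 2 = 1
    · right
      exact Submodule.eq_top_of_finrank_eq (le_antisymm (Submodule.finrank_le S) (key S s1 s2 hSn' hp))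
    · left
      have := key _ t1 t2 o2 (by omega)
      exact Submodule.finrank_eq_zero.1 (by omega)

theorem TT_invol [Fintype K] [DecidableEq K] [FiniteDimensional K V] (h2 : (2 : K) ≠ 0)
    {f : LinearMap.BilinForm K V} {φ : V ≃ₗ[K] V} (hs : f.IsSymm) {e : ℕ} {δ : ℤ}
    (h : TT f (sa φ) (sk φ) e δ) :
    ∃ σ : V ≃ₗ[K] V, σ ∈ orthGroup f ∧ σ ^ 2 = 1 ∧ σ * φ * σ⁻¹ = φ⁻¹ ∧
      LinearMap.det (σ : V →ₗ[K] V) = (-1) ^ e ∧ (e = 0 → δ = 1 → σ ∈ omegaGroup f) := by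
  obtain ⟨P, M, g, ht, l, lp, ln, ls, le, ld⟩ := h
  set σ := (l.map (refl f)).prod with hσ
  have sM : ∀ x ∈ M, σ x = -x := fun x hx => list_refl_span f hs l lp ln x (by rwa [ls])
  have sP : ∀ x ∈ P, σ x = x := fun x hx => list_refl_orth f l x fun y hy => by
    rw [hs.eq]; exact g.orth x hx y (by rw [← ls]; exact Submodule.subset_span hy)
  have dec : ∀ x, ∃ p ∈ P, ∃ m ∈ M, p + m = x := fun x =>
    Submodule.mem_sup.1 (by rw [ht]; trivial)
  have hsq : σ * σ = 1 := by
    ext x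
    obtain ⟨p, hp, m, hm, rfl⟩ := dec x
    simp [sP p hp, sM m hm]
  have hinv : σ⁻¹ = σ := inv_eq_of_mul_eq_one_left hsq
  have hrev : σ * φ = φ⁻¹ * σ := by
    ext x
    obtain ⟨p, hp, m, hm, rfl⟩ := dec x
    have e1 : (2 : K) • σ (φ (p + m)) = (2 : K) • φ.symm (σ (p + m)) := by
      rw [← map_smul, two_phi, two_phi_symm]
      simp only [map_add, sP p hp, sM m hm, map_neg]
      rw [sP _ (g.aP p hp), sM _ (g.aM m hm), sM _ (g.NP p hp), sP _ (g.NM m hm)]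
      abel
    exact smul_right_injective V h2 e1
  refine ⟨σ, list_refl_mem f hs l, by rw [pow_two, hsq], ?_, ?_, ?_⟩
  · rw [hrev, mul_assoc, mul_inv_cancel, mul_one]
  · rw [hσ, list_refl_det f l ln, ← le, neg_one_pow_eq_pow_mod_two]
  · rintro rfl rfl
    refine list_omega f hs h2 _ l rfl (Nat.even_iff.2 le) lp ln ?_
    refine (quadraticChar_one_iff_isSquare ?_).1 ld
    intro h0
    rw [h0] at ld; simp at ld

theorem det_one [FiniteDimensional K V] {f : LinearMap.BilinForm K V} (hn : f.Nondegenerate)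
    (h : Module.End K V) (hi : ∀ x y, f (h x) (h y) = f x y) (hd : LinearMap.det (1 + h) ≠ 0) :
    LinearMap.det h = 1 := by
  have e : f.comp (1 + h) h = f.comp 1 (1 + h) := by
    ext x y
    simp [hi]; ring
  let b := Module.finBasis K V
  have hb := (LinearMap.BilinForm.nondegenerate_iff_det_ne_zero b).1 hn
  have e2 := congrArg (fun B => (LinearMap.BilinForm.toMatrix b B).det) e
  simp only [LinearMap.BilinForm.toMatrix_comp b b, Matrix.det_mul, Matrix.det_transpose,
    LinearMap.det_toMatrix] at e2
  have : LinearMap.det (1 : Module.End K V) = 1 := LinearMap.det_id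
  rw [this, one_mul, mul_comm (LinearMap.det (1 + h)), mul_assoc] at e2
  have e3 := mul_left_cancel₀ hb e2
  exact mul_left_cancel₀ hd (e3.trans (mul_one _).symm)

theorem det_split [FiniteDimensional K V] {A B : Submodule K V} (hc : IsCompl A B)
    (g : Module.End K V) (hA : ∀ x ∈ A, g x ∈ A) (hB : ∀ x ∈ B, g x ∈ B) :
    LinearMap.det g = LinearMap.det (g.restrict hA) * LinearMap.det (g.restrict hB) := by
  rw [← LinearMap.det_prodMap, ← LinearMap.det_conj _ (A.prodEquivOfIsCompl B hc)]
  congr 1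
  ext x
  obtain ⟨y, rfl⟩ := (A.prodEquivOfIsCompl B hc).surjective x
  simp

theorem odd_of_det [Fintype K] [DecidableEq K] [FiniteDimensional K V] (h2 : (2 : K) ≠ 0)
    {f : LinearMap.BilinForm K V} {φ : V ≃ₗ[K] V} (D : Dat f (sa φ) (sk φ))
    (g : V ≃ₗ[K] V) (hg : g ∈ orthGroup f) (hc : g * φ = φ * g)
    (hd : LinearMap.det (g : V →ₗ[K] V) = -1) : OddS f (sa φ) (sk φ) := by
  set G : Module.End K V := g.toLinearMap with hG
  set Gi : Module.End K V := g.symm.toLinearMap with hGi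
  have c1 : Gi * G = 1 := by ext x; simp [hG, hGi]
  have c2 : G * Gi = 1 := by ext x; simp [hG, hGi]
  obtain ⟨k, hk, hk1⟩ := ((LinearMap.eventually_isCompl_ker_pow_range_pow (G + 1)).and
    (Filter.eventually_ge_atTop 1)).exists
  set E := LinearMap.ker ((G + 1) ^ k) with hE
  have adj : ∀ (j : ℕ) (x y : V), f x (((G + 1) ^ j) y) = f (((Gi + 1) ^ j) x) y := by
    intro j
    induction j with
    | zero => intro x y; rfl
    | succ j ih =>
      intro x y
      rw [pow_succ, pow_succ', Module.End.mul_apply, Module.End.mul_apply, ih]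
      simp only [LinearMap.add_apply, map_add, hG, hGi, LinearEquiv.coe_coe, orth_adj' hg,
        Module.End.one_apply]
  have hfac : (Gi + 1) ^ k = Gi ^ k * (G + 1) ^ k := by
    have hcm : Commute Gi (G + 1) := by
      change Gi * (G + 1) = (G + 1) * Gi
      rw [mul_add, add_mul, c1, c2, mul_one, one_mul]
    rw [← hcm.mul_pow, mul_add, c1, mul_one, add_comm]
  have hND : ND f E := by
    intro x hx h
    refine D.nd x trivial fun y _ => ?_
    have : y ∈ E ⊔ LinearMap.range ((G + 1) ^ k) := by rw [hk.sup_eq_top]; trivial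
    obtain ⟨u, hu, _, ⟨v, rfl⟩, rfl⟩ := Submodule.mem_sup.1 this
    rw [map_add, h u hu, adj, hfac, Module.End.mul_apply, show ((G + 1) ^ k) x = 0 from hx]
    simp
  have hφE : Invt (φ : V →ₗ[K] V) E := by
    intro x hx
    have hcm : Commute (φ : Module.End K V) G := by
      refine LinearMap.ext fun y => ?_
      exact (congrArg (fun t : V ≃ₗ[K] V => t y) hc).symm
    have h3 : Commute (φ : Module.End K V) ((G + 1) ^ k) :=
      (hcm.add_right (Commute.one_right _)).pow_right k
    have h4 := congrArg (fun t : Module.End K V => t x) h3.eq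
    simp only [Module.End.mul_apply, show ((G + 1) ^ k) x = 0 from hx, map_zero] at h4
    exact h4.symm
  have hGE : ∀ x ∈ E, G x ∈ E := by
    intro x hx
    have h3 : Commute G ((G + 1) ^ k) :=
      ((Commute.refl G).add_right (Commute.one_right _)).pow_right k
    have h4 := congrArg (fun t : Module.End K V => t x) h3.eq
    simp only [Module.End.mul_apply, show ((G + 1) ^ k) x = 0 from hx, map_zero] at h4
    exact h4.symm
  obtain ⟨i1, i2⟩ := dat_of_inv hφE
  refine ⟨E, i1, i2, hND, ?_⟩
  by_contra hodd
  obtain ⟨o1, o2, -⟩ := orth_facts D hND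
  have hGiE : ∀ x ∈ E, Gi x ∈ E := by
    obtain ⟨j1, j2⟩ := dat_of_inv (φ := g) (U := E) hGE
    intro x hx
    refine (E.smul_mem_iff h2).1 ?_
    change (2 : K) • g.symm x ∈ E
    rw [two_phi_symm]
    exact E.sub_mem (j1 x hx) (j2 x hx)
  set R := f.orthogonal E with hR
  have hGR : ∀ x ∈ R, G x ∈ R := by
    intro x hx y hy
    change f y (g x) = 0
    rw [← orth_adj' hg]
    exact hx _ (hGiE y hy)
  have hcomp : IsCompl E R :=
    ⟨ND_disj f D.hs hND fun x hx y hy => hy x hx, codisjoint_iff.2 o1⟩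
  have d1 : LinearMap.det (G.restrict hGR) = 1 := by
    refine det_one ((ND_restrict f D.hs R).1 o2) _ (fun x y => hg _ _) ?_
    intro h0
    obtain ⟨x, hx, hx0⟩ := (Submodule.ne_bot_iff _).1 (LinearMap.bot_lt_ker_of_det_eq_zero h0).ne'
    have hx1 : (G + 1) (x : V) = 0 := by
      have := congrArg Subtype.val (show (1 + G.restrict hGR) x = 0 from hx)
      rw [add_comm] at this
      exact this
    have hxE : (x : V) ∈ E := by
      change ((G + 1) ^ k) (x : V) = 0
      obtain ⟨j, rfl⟩ : ∃ j, k = j + 1 := ⟨k - 1, by omega⟩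
      rw [pow_succ, Module.End.mul_apply, hx1, map_zero]
    exact hx0 (Subtype.ext (Submodule.disjoint_def.1 hcomp.disjoint _ hxE x.2))
  have d2 : LinearMap.det (G.restrict hGE) = 1 := by
    set H := G.restrict hGE with hH
    have hnil : IsNilpotent (H + 1) := by
      refine ⟨k, ?_⟩
      have : ∀ (j : ℕ) (x : E), (((H + 1) ^ j) x : V) = ((G + 1) ^ j) x := by
        intro j
        induction j with
        | zero => intro x; rfl
        | succ j ih =>
          intro x
          rw [pow_succ', pow_succ', Module.End.mul_apply, Module.End.mul_apply, ← ih]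
          rfl
      ext x
      rw [this]
      exact x.2
    have h5 := hnil.charpoly_eq_X_pow_finrank
    have h6 := LinearMap.eval_charpoly (H + 1) (1 : K)
    rw [h5, map_one] at h6
    have h7 : (1 : Module.End K E) - (H + 1) = (-1 : K) • H := by module
    rw [h7, LinearMap.det_smul, (Nat.even_iff.2 (by omega) : Even (finrank K E)).neg_one_pow] at h6
    simpa using h6.symm
  rw [det_split hcomp G hGE hGR, d1, d2] at hd
  apply h2
  linear_combination hd

end Fin


/-- For `K = GF(q)`, `q ≡ 1 (mod 4)`, and `φ ∈ O(V)`, the following are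
equivalent: (1) `φ` is reversed by an involution of `Ω(V)`; (2) `φ` is reversed by an element
of `SO(V)`; (3) if `dim V ≡ 2 (mod 4)` then `φ` has an orthogonally indecomposable orthogonal
summand of odd dimension. -/
theorem stmt3 [Fintype K] {q : ℕ} (hq : Fintype.card K = q) (h1 : q % 4 = 1)
    [FiniteDimensional K V]
    (f : LinearMap.BilinForm K V) (hsymm : f.IsSymm) (hnd : f.Nondegenerate)
    (φ : V ≃ₗ[K] V) (hφ : φ ∈ orthGroup f) :
    ((∃ σ : V ≃ₗ[K] V, σ ∈ omegaGroup f ∧ σ ^ 2 = 1 ∧ σ * φ * σ⁻¹ = φ⁻¹) ↔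
        (∃ α : V ≃ₗ[K] V, α ∈ specialOrthGroup f ∧ α * φ * α⁻¹ = φ⁻¹)) ∧
      ((∃ α : V ≃ₗ[K] V, α ∈ specialOrthGroup f ∧ α * φ * α⁻¹ = φ⁻¹) ↔
        (Module.finrank K V % 4 = 2 →
          ∃ (U : Submodule K V) (hU : Invt (φ : V →ₗ[K] V) U),
            (f.restrict U).Nondegenerate ∧ Odd (Module.finrank K U) ∧
            OrthIndec (f.restrict U) ((φ : V →ₗ[K] V).restrict hU))) := by
  classical
  have h2 : (2 : K) ≠ 0 := by
    refine Ring.two_ne_zero ?_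
    intro hch
    have := (FiniteField.even_card_iff_char_two (F := K)).1 hch
    omega
  have hsq : IsSquare (-1 : K) := FiniteField.isSquare_neg_one_iff.2 (by omega)
  have D := dat_of hsymm (ND_top f hnd) hφ
  have Q := main_Q h2 hsq _ f _ _ rfl D
  have h12 : (∃ σ : V ≃ₗ[K] V, σ ∈ omegaGroup f ∧ σ ^ 2 = 1 ∧ σ * φ * σ⁻¹ = φ⁻¹) →
      (∃ α : V ≃ₗ[K] V, α ∈ specialOrthGroup f ∧ α * φ * α⁻¹ = φ⁻¹) := by
    rintro ⟨σ, hσ, -, h⟩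
    refine ⟨σ, ?_, h⟩
    have hle : omegaGroup f ≤ specialOrthGroup f := by
      refine Subgroup.commutator_le.2 fun x hx y hy => ⟨?_, ?_⟩
      · rw [commutatorElement_def]
        exact (orthGroup f).mul_mem ((orthGroup f).mul_mem ((orthGroup f).mul_mem hx hy)
          ((orthGroup f).inv_mem hx)) ((orthGroup f).inv_mem hy)
      · rw [← LinearEquiv.coe_det, map_commutatorElement, commutatorElement_eq_one_iff_mul_comm.2
          (mul_comm _ _), Units.val_one]
    exact hle hσ
  have h23 : (∃ α : V ≃ₗ[K] V, α ∈ specialOrthGroup f ∧ α * φ * α⁻¹ = φ⁻¹) →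
      (Module.finrank K V % 4 = 2 →
          ∃ (U : Submodule K V) (hU : Invt (φ : V →ₗ[K] V) U),
            (f.restrict U).Nondegenerate ∧ Odd (Module.finrank K U) ∧
            OrthIndec (f.restrict U) ((φ : V →ₗ[K] V).restrict hU)) := by
    rintro ⟨α, ⟨hα, hαd⟩, hr⟩ hn
    apply OddS_indec h2 D
    rcases Q with ⟨q, -⟩ | ⟨-, q, -⟩ | ⟨q, -⟩
    · omega
    · obtain ⟨σ, s1, s2, s3, s4, -⟩ := TT_invol h2 hsymm q
      refine odd_of_det h2 D (σ * α) ((orthGroup f).mul_mem s1 hα) ?_ ?_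
      · have r1 : α * φ = φ⁻¹ * α := mul_inv_eq_iff_eq_mul.1 hr
        have r2 : σ * φ⁻¹ = φ * σ := by
          rw [← mul_inv_eq_iff_eq_mul]
          have := congrArg (fun t => t⁻¹) s3
          simpa [mul_assoc] using this
        rw [mul_assoc, r1, ← mul_assoc, r2, mul_assoc]
      · rw [LinearEquiv.coe_toLinearMap_mul, map_mul, s4, hαd]; simp
    · exact q
  have h31 : (Module.finrank K V % 4 = 2 →
          ∃ (U : Submodule K V) (hU : Invt (φ : V →ₗ[K] V) U),
            (f.restrict U).Nondegenerate ∧ Odd (Module.finrank K U) ∧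
            OrthIndec (f.restrict U) ((φ : V →ₗ[K] V).restrict hU)) →
      (∃ σ : V ≃ₗ[K] V, σ ∈ omegaGroup f ∧ σ ^ 2 = 1 ∧ σ * φ * σ⁻¹ = φ⁻¹) := by
    intro h
    have T : TT f (sa φ) (sk φ) 0 1 := by
      rcases Q with ⟨-, q⟩ | ⟨q, t1, t2⟩ | ⟨-, q, -⟩
      · exact q
      · obtain ⟨U, hU, hn, ho, -⟩ := h q
        rw [Nat.odd_iff] at ho
        obtain ⟨ha, hN⟩ := dat_of_inv hU
        have hW := (ND_restrict f hsymm U).2 hn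
        obtain ⟨o1, o2, o3⟩ := orth_facts D hW
        obtain ⟨ha', hN'⟩ := orth_inv D ha hN
        have q1 := main_Q h2 hsq _ _ _ _ rfl (D.restr ha hN hW)
        have q2 := main_Q h2 hsq _ _ _ _ rfl (D.restr ha' hN' o2)
        have G := TT_glue (a := sa φ) (N := sk φ) (ha := ha) (hN := hN) (ha' := ha') (hN' := hN')
          hsymm (W' := f.orthogonal U) (fun x hx y hy => hy x hx) o1
        rcases q1 with ⟨c, -⟩ | ⟨c, -⟩ | ⟨-, c1, δ, c2⟩
        · omega
        · omega
        · rcases q2 with ⟨c, -⟩ | ⟨c, -⟩ | ⟨-, c3, -⟩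
          · omega
          · omega
          · exact G _ _ _ _ c1 c3
      · exact q
    obtain ⟨σ, s1, s2, s3, -, s5⟩ := TT_invol h2 hsymm T
    exact ⟨σ, s5 rfl rfl, s2, s3⟩
  exact ⟨⟨h12, fun h => h31 (h23 h)⟩, ⟨h23, fun h => h12 (h31 h)⟩⟩

end Biref
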